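/- arXiv:1907.10563 — 6 statements merged into one kernel-verified Lean document; each statement's English description precedes it below -/
import Mathlib

section
/- Let 0 < p < ∞ and let ω be a regular radial weight. Then there exists a constant C ≥ 1 such that C^{-1}‖f‖_{A^p_ω} ≤ ‖Re f‖_{L^p_ω} ≤ C‖f‖_{A^p_ω} for every analytic f on 𝔻 with Im f(0) = 0. -/
/-!
Only the bound of `‖f‖` by `‖Re f‖` needs an argument. Write `u = Re f` and let `η` be small.

*Local estimates.* For every `p > 0`, `|u| ^ p` has the sub-mean value property up to a constant
(`re_pow_le`). Combined with the Borel-Carathéodory theorem this bounds the oscillation of `f` on half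
of a disc `B` by the mean of `|u| ^ p` over `B` (`osc_pow_le`). The discs used are the Whitney discs of
centre `z` and radius `η (1 - |z|)`.

*The weight.* A regular weight is comparable to `W(r) = ω̂(r) / (1 - r)`, which is almost constant on
Whitney discs (`RadialWeight.assocW_loc`) and satisfies, with `κ = η / 2` and some `q < 1`,
`W((s + κ) / (1 + κ)) ≤ (1 + κ) q W(s)` (`RadialWeight.assocW_contr`).

*Absorption along radii.* For `z = r e^{iθ}` let `w` be the point of the same radius with modulus
`(1 + κ) r - κ`. Then `|f(z)| ^ p ≤ (1 + δ) ^ p |f(w)| ^ p + C_δ |f(z) - f(w)| ^ p`, and the last term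
is at most a Whitney average of `|u| ^ p`. Integrating against `W` in `r` and changing variables, the
first term contributes at most `(1 + δ) ^ p q` times the left-hand side, and `δ` is taken so small that
this is absorbed (`hardy_one_dim`). Points with `|z| < κ / (1 + κ)` are handled by the local estimates at
the origin, where `Im f(0) = 0` gives `|f(0)| = |u(0)|`. Integration in `θ` and Fubini over Whitney
discs (`lintegral_whitneyAvg_le`) give the theorem (`analytic_le_re`).

Everything is carried out with lower Lebesgue integrals, so infinite norms need no separate treatment
until the last step: there the two integrals are finite or infinite together.
-/

open MeasureTheory Set

/-- Tail integral `ω̂(r) = ∫_r^1 ω(s) ds`. -/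
noncomputable def tailInt (ω : ℝ → ℝ) (r : ℝ) : ℝ := ∫ s in r..1, ω s

/-- A radial weight: nonnegative, integrable on `[0,1)`, with positive tails. -/
def RadialWeight (ω : ℝ → ℝ) : Prop :=
  (∀ r ∈ Set.Ico (0:ℝ) 1, 0 ≤ ω r) ∧ MeasureTheory.IntegrableOn ω (Set.Ico 0 1) ∧
    ∀ r ∈ Set.Ico (0:ℝ) 1, 0 < tailInt ω r

/-- The class `D̂` of upper doubling weights. -/
def Dhat (ω : ℝ → ℝ) : Prop :=
  ∃ C : ℝ, 1 ≤ C ∧ ∀ r ∈ Set.Ico (0:ℝ) 1, tailInt ω r ≤ C * tailInt ω ((1 + r) / 2)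

/-- The class `Ď`. -/
def Dcheck (ω : ℝ → ℝ) : Prop :=
  ∃ K C : ℝ, 1 < K ∧ 1 < C ∧ ∀ r ∈ Set.Ico (0:ℝ) 1,
    C * tailInt ω (1 - (1 - r) / K) ≤ tailInt ω r

/-- The associated weight `ω̃(r) = ω̂(r)/(1-r)`. -/
noncomputable def assocW (ω : ℝ → ℝ) (r : ℝ) : ℝ := tailInt ω r / (1 - r)

/-- `‖f‖_{A^p_ω}^p = ∫_𝔻 |f|^p ω dA`, with `dA` the normalized area measure. -/
noncomputable def ApNorm (p : ℝ) (ω : ℝ → ℝ) (f : ℂ → ℂ) : ℝ :=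
  Real.pi⁻¹ * ∫ z in Metric.ball (0:ℂ) 1, ‖f z‖ ^ p * ω ‖z‖

/-- `‖Re f‖_{L^p_ω}^p = ∫_𝔻 |Re f|^p ω dA`. -/
noncomputable def LpReNorm (p : ℝ) (ω : ℝ → ℝ) (f : ℂ → ℂ) : ℝ :=
  Real.pi⁻¹ * ∫ z in Metric.ball (0:ℂ) 1, |(f z).re| ^ p * ω ‖z‖

/-- `M_p^p(s, Re f)`, the `p`-th power of the `p`-mean of `Re f` on the circle of radius `s`. -/
noncomputable def Mpp (p : ℝ) (f : ℂ → ℂ) (s : ℝ) : ℝ :=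
  (2 * Real.pi)⁻¹ * ∫ θ in (0:ℝ)..(2 * Real.pi),
    |(f ((s : ℂ) * Complex.exp ((θ : ℂ) * Complex.I))).re| ^ p

/-- `sup_{0<s<r} M_p^p(s, Re f)`. -/
noncomputable def supMpp (p : ℝ) (f : ℂ → ℂ) (r : ℝ) : ℝ :=
  sSup ((fun s => Mpp p f s) '' Set.Ioo (0:ℝ) r)

/-! ### Polar coordinates and mean values -/

/-- Polar coordinates in the plane, with the radial integral inside and `circleMap 0 r θ = r e^{iθ}`. -/
theorem lintegral_polar {F : ℂ → ENNReal} (hF : Measurable F) :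
    ∫⁻ z, F z = ∫⁻ θ in Ioo (-Real.pi) Real.pi, ∫⁻ r in Ioi (0:ℝ),
      ENNReal.ofReal r * F (circleMap 0 r θ) := by
  have hm : Measurable fun q : ℝ × ℝ => ENNReal.ofReal q.1 * F (circleMap 0 q.1 q.2) := by
    have : Measurable fun q : ℝ × ℝ => circleMap 0 q.1 q.2 := by
      unfold circleMap; fun_prop
    fun_prop
  rw [← Complex.lintegral_comp_polarCoord_symm, polarCoord_target, Measure.volume_eq_prod,
    ← Measure.prod_restrict, lintegral_prod_symm']
  · refine lintegral_congr fun θ => lintegral_congr fun r => ?_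
    simp only [smul_eq_mul, circleMap, zero_add, Complex.polarCoord_symm_apply, Complex.exp_mul_I]
    simp
  · convert hm using 2 with q
    simp [circleMap, Complex.polarCoord_symm_apply, Complex.exp_mul_I]

/-- Sub-mean value property of `|Re f|` on a circle, with the normalization `2π` moved to the left. -/
theorem circle_mean {f : ℂ → ℂ} {w : ℂ} {r : ℝ} (hr : 0 < r)
    (hf : DiffContOnCl ℂ f (Metric.ball w r)) :
    ENNReal.ofReal |(f w).re| * ENNReal.ofReal (2 * Real.pi) ≤
      ∫⁻ θ in Ioo (-Real.pi) Real.pi, ENNReal.ofReal |(f (circleMap w r θ)).re| := by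
  have h := DiffContOnCl.circleAverage (f := f) (c := w) (R := r) (by rwa [abs_of_pos hr])
  have hc : Continuous fun θ => f (circleMap w r θ) := by
    have h1 : ContinuousOn f (Metric.closedBall w r) := by
      rw [← closure_ball _ hr.ne']; exact hf.2
    rw [← continuousOn_univ]
    exact h1.comp (continuous_circleMap w r).continuousOn
      fun θ _ => circleMap_mem_closedBall w hr.le θ
  have hper : Function.Periodic (fun θ => f (circleMap w r θ)) (2 * Real.pi) :=
    fun θ => by simp [periodic_circleMap w r θ]
  rw [Real.circleAverage_def] at h
  have h2 : ∫ θ in (0:ℝ)..2 * Real.pi, f (circleMap w r θ) = ((2 * Real.pi : ℝ)) • f w := by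
    rw [← h, smul_smul, mul_inv_cancel₀ (by positivity), one_smul]
  have h3 : ∫ θ in (-Real.pi)..Real.pi, f (circleMap w r θ) = ((2 * Real.pi : ℝ)) • f w := by
    rw [← h2]
    have := hper.intervalIntegral_add_eq (-Real.pi) 0
    rw [show -Real.pi + 2 * Real.pi = Real.pi by ring, zero_add] at this
    exact this
  have h4 : ∫ θ in (-Real.pi)..Real.pi, (f (circleMap w r θ)).re = 2 * Real.pi * (f w).re := by
    have := Complex.reCLM.intervalIntegral_comp_comm
      (hc.intervalIntegrable (μ := volume) (-Real.pi) Real.pi)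
    simp only [Complex.reCLM_apply] at this
    rw [this, h3]; simp
  rw [intervalIntegral.integral_of_le (by linarith [Real.pi_pos]), integral_Ioc_eq_integral_Ioo] at h4
  have h5 := enorm_integral_le_lintegral_enorm (μ := volume.restrict (Ioo (-Real.pi) Real.pi))
    (fun θ => (f (circleMap w r θ)).re)
  rw [h4] at h5
  simp only [Real.enorm_eq_ofReal_abs] at h5
  rwa [abs_mul, abs_of_pos (by positivity : 0 < 2 * Real.pi), mul_comm,
    ENNReal.ofReal_mul (abs_nonneg _)] at h5

/-- Sub-mean value property of `|Re f|` over a disc. -/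
theorem area_mean {f : ℂ → ℂ} (hfm : Measurable f) {w : ℂ} {ρ : ℝ} (hρ : 0 < ρ)
    (hf : DifferentiableOn ℂ f (Metric.ball w ρ)) :
    ENNReal.ofReal |(f w).re| * ENNReal.ofReal (Real.pi * ρ ^ 2) ≤
      ∫⁻ z in Metric.ball w ρ, ENNReal.ofReal |(f z).re| := by
  set g : ℂ → ENNReal := fun z => ENNReal.ofReal |(f z).re| with hg
  have hgm : Measurable g := by
    rw [hg]; exact ((Complex.measurable_re.comp hfm).abs).ennreal_ofReal
  have hcm : Measurable fun q : ℝ × ℝ => circleMap 0 q.1 q.2 := by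
    unfold circleMap; fun_prop
  have e1 : ∫⁻ z in Metric.ball w ρ, g z = ∫⁻ z, (Metric.ball (0:ℂ) ρ).indicator (fun z => g (w + z)) z := by
    rw [← lintegral_indicator Metric.isOpen_ball.measurableSet,
      ← lintegral_add_left_eq_self _ w]
    refine lintegral_congr fun z => ?_
    by_cases hz : z ∈ Metric.ball (0:ℂ) ρ
    · rw [indicator_of_mem hz, indicator_of_mem]
      simpa using hz
    · rw [indicator_of_notMem hz, indicator_of_notMem]
      simpa using hz
  have hm2 : Measurable ((Metric.ball (0:ℂ) ρ).indicator (fun z => g (w + z))) :=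
    (hgm.comp (measurable_const_add w)).indicator Metric.isOpen_ball.measurableSet
  rw [e1, lintegral_polar hm2, lintegral_lintegral_swap]
  swap
  · apply Measurable.aemeasurable
    simp only [Function.uncurry_def]
    exact (measurable_snd.ennreal_ofReal).mul (hm2.comp (hcm.comp measurable_swap))
  calc g w * ENNReal.ofReal (Real.pi * ρ ^ 2)
      = ∫⁻ r in Ioo (0:ℝ) ρ, ENNReal.ofReal r * (g w * ENNReal.ofReal (2 * Real.pi)) := by
        have : ∫⁻ r in Ioo (0:ℝ) ρ, ENNReal.ofReal r = ENNReal.ofReal (ρ ^ 2 / 2) := by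
          rw [← ofReal_integral_eq_lintegral_ofReal]
          · rw [← integral_Ioc_eq_integral_Ioo, ← intervalIntegral.integral_of_le hρ.le, integral_id]
            simp
          · exact (continuous_id.integrableOn_Icc (a := 0) (b := ρ)).mono_set Ioo_subset_Icc_self
          · filter_upwards [ae_restrict_mem measurableSet_Ioo] with r hr using hr.1.le
        rw [lintegral_mul_const _ (by fun_prop), this, mul_left_comm,
          ← ENNReal.ofReal_mul (p := ρ ^ 2 / 2) (by positivity),
          show ρ ^ 2 / 2 * (2 * Real.pi) = Real.pi * ρ ^ 2 by ring]
    _ ≤ ∫⁻ r in Ioo (0:ℝ) ρ, ∫⁻ θ in Ioo (-Real.pi) Real.pi, ENNReal.ofReal r *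
          (Metric.ball (0:ℂ) ρ).indicator (fun z => g (w + z)) (circleMap 0 r θ) := by
        refine setLIntegral_mono' measurableSet_Ioo fun r hr => ?_
        have hm3 : Measurable fun θ => (Metric.ball (0:ℂ) ρ).indicator (fun z => g (w + z))
            (circleMap 0 r θ) := hm2.comp (continuous_circleMap 0 r).measurable
        rw [lintegral_const_mul _ hm3]
        gcongr
        refine (circle_mean (f := f) (w := w) (r := r) hr.1 ?_).trans_eq ?_
        · apply DifferentiableOn.diffContOnCl
          rw [closure_ball _ hr.1.ne']
          exact hf.mono (Metric.closedBall_subset_ball hr.2)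
        · refine lintegral_congr fun θ => ?_
          rw [indicator_of_mem]
          · simp [hg, circleMap]
          · simp [abs_of_pos hr.1, hr.2]
    _ ≤ _ := lintegral_mono_set Ioo_subset_Ioi_self

/-! ### Local estimates by the real part -/

/-- The scalar inequality behind `re_pow_le`: `v ^ (1 - p) ≲ u ^ (1 - p)` when `u / 2 ≤ v ≤ L u`, and
smaller values of `v` are absorbed by `u / 2`. -/
theorem scal_ineq (p L : ℝ) (hL : 1 ≤ L) : ∃ K : ℝ, 0 < K ∧ ∀ u v : ℝ, 0 < u → 0 ≤ v →
    v ≤ L * u → v ≤ u / 2 + K * u ^ (1 - p) * v ^ p := by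
  refine ⟨max (L ^ (1 - p)) ((1 / 2 : ℝ) ^ (1 - p)), by positivity, fun u v hu hv hvL => ?_⟩
  set K := max (L ^ (1 - p)) ((1 / 2 : ℝ) ^ (1 - p)) with hK
  rcases le_or_gt v (u / 2) with h | h
  · have : 0 ≤ K * u ^ (1 - p) * v ^ p := by positivity
    linarith
  have hv0 : 0 < v := by linarith
  have hle : v ^ (1 - p) ≤ K * u ^ (1 - p) := by
    rcases le_total p 1 with hp | hp
    · calc v ^ (1 - p) ≤ (L * u) ^ (1 - p) := Real.rpow_le_rpow hv hvL (by linarith)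
        _ = L ^ (1 - p) * u ^ (1 - p) := Real.mul_rpow (by linarith) hu.le
        _ ≤ _ := by gcongr; exact le_max_left _ _
    · calc v ^ (1 - p) ≤ (1 / 2 * u) ^ (1 - p) :=
            Real.rpow_le_rpow_of_nonpos (by positivity) (by linarith) (by linarith)
        _ = (1 / 2) ^ (1 - p) * u ^ (1 - p) := Real.mul_rpow (by norm_num) hu.le
        _ ≤ _ := by gcongr; exact le_max_right _ _
  have : v = v ^ (1 - p) * v ^ p := by
    rw [← Real.rpow_add hv0]; simp
  calc v = v ^ (1 - p) * v ^ p := this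
    _ ≤ K * u ^ (1 - p) * v ^ p := by gcongr
    _ ≤ _ := by linarith

/-- Sub-mean value property of `|Re f| ^ p` up to a constant, for every `p > 0`. It is proved at the
point `w₀` where `|Re f| (d - |w - z|) ^ (2 / p)` is maximal: on the disc about `w₀` of radius half
the distance to the boundary, `|Re f|` is at most `2 ^ (2 / p)` times its value at `w₀`, so that
`scal_ineq` turns the linear mean value property into one with exponent `p`. -/
theorem re_pow_le (p : ℝ) (hp : 0 < p) : ∃ C : ℝ, 0 < C ∧ ∀ (f : ℂ → ℂ), Measurable f →
    ∀ (z : ℂ) (d : ℝ), 0 < d → DifferentiableOn ℂ f (Metric.closedBall z d) →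
    ∀ w ∈ Metric.closedBall z d, ENNReal.ofReal (|(f w).re| ^ p * (d - dist w z) ^ 2) ≤
      ENNReal.ofReal C * ∫⁻ x in Metric.ball z d, ENNReal.ofReal (|(f x).re| ^ p) := by
  obtain ⟨K, hK, hKs⟩ := scal_ineq p (2 ^ (2 / p)) (Real.one_le_rpow (by norm_num) (by positivity))
  refine ⟨8 * K / Real.pi, by positivity, fun f hfm z d hd hf w hw => ?_⟩
  set I := ∫⁻ x in Metric.ball z d, ENNReal.ofReal (|(f x).re| ^ p) with hI
  have hcont : ContinuousOn (fun x => |(f x).re| * (d - dist x z) ^ (2 / p))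
      (Metric.closedBall z d) := by
    refine ((Complex.continuous_re.comp_continuousOn hf.continuousOn).abs).mul ?_
    refine ContinuousOn.rpow_const (by fun_prop) fun x hx => Or.inr (by positivity)
  obtain ⟨w0, hw0, hmax⟩ := (isCompact_closedBall z d).exists_isMaxOn ⟨w, hw⟩ hcont
  have hpow : ∀ x ∈ Metric.closedBall z d, |(f x).re| ^ p * (d - dist x z) ^ 2 =
      (|(f x).re| * (d - dist x z) ^ (2 / p)) ^ p := by
    intro x hx
    have : 0 ≤ d - dist x z := by linarith [Metric.mem_closedBall.1 hx]
    rw [Real.mul_rpow (abs_nonneg _) (by positivity), ← Real.rpow_mul this,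
      div_mul_cancel₀ _ hp.ne']
    norm_cast
  have h1 : |(f w).re| ^ p * (d - dist w z) ^ 2 ≤ |(f w0).re| ^ p * (d - dist w0 z) ^ 2 := by
    rw [hpow w hw, hpow w0 hw0]
    have : 0 ≤ d - dist w z := by linarith [Metric.mem_closedBall.1 hw]
    exact Real.rpow_le_rpow (by positivity) (hmax hw) hp.le
  refine (ENNReal.ofReal_le_ofReal h1).trans ?_
  set u := |(f w0).re| with hu
  set δ := d - dist w0 z with hδ
  have hδ0 : 0 ≤ δ := by rw [hδ]; linarith [Metric.mem_closedBall.1 hw0]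
  rcases hδ0.eq_or_lt with h | hδp
  · simp [← h]
  rcases (abs_nonneg (f w0).re).eq_or_lt with h | hup
  · rw [hu, ← h, Real.zero_rpow hp.ne']; simp
  rw [← hu] at hup
  by_cases hItop : I = ⊤
  · rw [hItop, ENNReal.mul_top]
    · exact le_top
    · simp only [ne_eq, ENNReal.ofReal_eq_zero, not_le]; positivity
  have hsub : Metric.ball w0 (δ / 2) ⊆ Metric.ball z d := by
    apply Metric.ball_subset_ball'
    linarith
  have hbound : ∀ x ∈ Metric.ball w0 (δ / 2), |(f x).re| ≤ 2 ^ (2 / p) * u := by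
    intro x hx
    have hx1 : dist x z ≤ dist x w0 + dist w0 z := dist_triangle _ _ _
    have hx2 := Metric.mem_ball.1 hx
    have h2 : |(f x).re| * (d - dist x z) ^ (2 / p) ≤ u * δ ^ (2 / p) :=
      hmax (Metric.ball_subset_closedBall (hsub hx))
    have h3 : (δ / 2) ^ (2 / p) ≤ (d - dist x z) ^ (2 / p) :=
      Real.rpow_le_rpow (by positivity) (by linarith) (by positivity)
    have h4 : |(f x).re| * (δ / 2) ^ (2 / p) ≤ u * δ ^ (2 / p) :=
      (mul_le_mul_of_nonneg_left h3 (abs_nonneg _)).trans h2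
    rw [Real.div_rpow hδ0 (by norm_num), ← mul_div_assoc, div_le_iff₀ (by positivity)] at h4
    have h5 : 0 < δ ^ (2 / p) := by positivity
    nlinarith
  have hmean := area_mean hfm (half_pos hδp) (hf.mono
    (hsub.trans Metric.ball_subset_closedBall))
  have hvol : volume (Metric.ball w0 (δ / 2)) = ENNReal.ofReal (Real.pi * (δ / 2) ^ 2) := by
    rw [Complex.volume_ball, mul_comm Real.pi, ENNReal.ofReal_mul (by positivity),
      ENNReal.ofReal_pow (by positivity), ← NNReal.coe_real_pi, ENNReal.ofReal_coe_nnreal]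
  have hup2 : ∫⁻ x in Metric.ball w0 (δ / 2), ENNReal.ofReal |(f x).re| ≤
      ENNReal.ofReal (u / 2 * (Real.pi * (δ / 2) ^ 2)) + ENNReal.ofReal (K * u ^ (1 - p)) * I := by
    calc _ ≤ ∫⁻ x in Metric.ball w0 (δ / 2), (ENNReal.ofReal (u / 2) +
            ENNReal.ofReal (K * u ^ (1 - p)) * ENNReal.ofReal (|(f x).re| ^ p)) := by
          refine setLIntegral_mono' Metric.isOpen_ball.measurableSet fun x hx => ?_
          rw [← ENNReal.ofReal_mul (by positivity), ← ENNReal.ofReal_add (by positivity)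
            (by positivity)]
          exact ENNReal.ofReal_le_ofReal (hKs u _ hup (abs_nonneg _) (hbound x hx))
      _ = ENNReal.ofReal (u / 2 * (Real.pi * (δ / 2) ^ 2)) + ENNReal.ofReal (K * u ^ (1 - p)) *
            ∫⁻ x in Metric.ball w0 (δ / 2), ENNReal.ofReal (|(f x).re| ^ p) := by
          rw [lintegral_add_left measurable_const, setLIntegral_const, hvol,
            ← ENNReal.ofReal_mul (by positivity), lintegral_const_mul']
          exact ENNReal.ofReal_ne_top
      _ ≤ _ := by gcongr; exact lintegral_mono_set hsub
  have h6 := hmean.trans hup2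
  obtain ⟨i, hi0, hi⟩ : ∃ i : ℝ, 0 ≤ i ∧ I = ENNReal.ofReal i :=
    ⟨I.toReal, ENNReal.toReal_nonneg, (ENNReal.ofReal_toReal hItop).symm⟩
  rw [hi, ← ENNReal.ofReal_mul (by positivity), ← ENNReal.ofReal_mul (by positivity),
    ← ENNReal.ofReal_add (by positivity) (by positivity),
    ENNReal.ofReal_le_ofReal_iff (by positivity), ← hu] at h6
  rw [hi, ← ENNReal.ofReal_mul (by positivity)]
  apply ENNReal.ofReal_le_ofReal
  have h7 : u * (Real.pi * δ ^ 2) / 8 ≤ K * u ^ (1 - p) * i := by nlinarith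
  have h8 : u = u ^ p * u ^ (1 - p) := by
    rw [← Real.rpow_add hup]; simp
  have h9 : 0 < u ^ (1 - p) := by positivity
  have h10 : u ^ p * (Real.pi * δ ^ 2) / 8 ≤ K * i := by
    refine le_of_mul_le_mul_right ?_ h9
    calc u ^ p * (Real.pi * δ ^ 2) / 8 * u ^ (1 - p)
        = (u ^ p * u ^ (1 - p)) * (Real.pi * δ ^ 2) / 8 := by ring
      _ = u * (Real.pi * δ ^ 2) / 8 := by rw [← h8]
      _ ≤ _ := by linarith
  rw [div_mul_eq_mul_div, le_div_iff₀ Real.pi_pos]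
  linarith

/-- Oscillation estimate: `re_pow_le` bounds `|Re f|` on the disc of radius `3d/4`, and the
Borel-Carathéodory theorem then bounds `f - f z` on the disc of radius `d/2`. -/
theorem osc_pow_le (p : ℝ) (hp : 0 < p) : ∃ C : ℝ, 0 < C ∧ ∀ (f : ℂ → ℂ), Measurable f →
    ∀ (z : ℂ) (d : ℝ), 0 < d → DifferentiableOn ℂ f (Metric.closedBall z d) →
    ∀ w, dist w z ≤ d / 2 → ENNReal.ofReal (‖f w - f z‖ ^ p * d ^ 2) ≤
      ENNReal.ofReal C * ∫⁻ x in Metric.ball z d, ENNReal.ofReal (|(f x).re| ^ p) := by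
  obtain ⟨A, hA, hAs⟩ := re_pow_le p hp
  refine ⟨8 ^ p * (16 * A), by positivity, fun f hfm z d hd hf w hw => ?_⟩
  have hsup := hAs f hfm z d hd hf
  set I := ∫⁻ x in Metric.ball z d, ENNReal.ofReal (|(f x).re| ^ p) with hI
  by_cases hItop : I = ⊤
  · rw [hItop, ENNReal.mul_top]
    · exact le_top
    · simp only [ne_eq, ENNReal.ofReal_eq_zero, not_le]; positivity
  obtain ⟨i, hi0, hi⟩ : ∃ i : ℝ, 0 ≤ i ∧ I = ENNReal.ofReal i :=
    ⟨I.toReal, ENNReal.toReal_nonneg, (ENNReal.ofReal_toReal hItop).symm⟩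
  rw [hi, ← ENNReal.ofReal_mul (by positivity)] at hsup ⊢
  apply ENNReal.ofReal_le_ofReal
  set M := (16 * A * i / d ^ 2) ^ (1 / p) with hM
  have hM0 : 0 ≤ M := by positivity
  have hMp : M ^ p = 16 * A * i / d ^ 2 := by
    rw [hM, ← Real.rpow_mul (by positivity), one_div_mul_cancel hp.ne', Real.rpow_one]
  have hu : ∀ x ∈ Metric.ball z (3 * d / 4), |(f x).re| ≤ M := by
    intro x hx
    have hx' := Metric.mem_ball.1 hx
    have h1 := hsup x (Metric.mem_closedBall.2 (by linarith))
    rw [ENNReal.ofReal_le_ofReal_iff (by positivity)] at h1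
    rw [← Real.rpow_le_rpow_iff (abs_nonneg _) hM0 hp, hMp, le_div_iff₀ (by positivity)]
    have h2 : (d / 4) ^ 2 ≤ (d - dist x z) ^ 2 := by
      apply pow_le_pow_left₀ (by positivity); linarith
    have h3 : 0 ≤ |(f x).re| ^ p := by positivity
    nlinarith
  have hb : ‖f w - f z‖ ≤ 8 * M := by
    refine le_of_forall_pos_le_add fun ε hε => ?_
    have hdiff : DifferentiableOn ℂ (fun x => f (z + x) - f z) (Metric.ball 0 (3 * d / 4)) := by
      refine DifferentiableOn.sub_const (hf.comp (by fun_prop) fun x hx => ?_) _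
      have := mem_ball_zero_iff.1 hx
      simp only [Metric.mem_closedBall, dist_self_add_left]
      linarith
    have hwn : ‖w - z‖ ≤ d / 2 := by rwa [← dist_eq_norm]
    have h1 := Complex.borelCaratheodory_zero (f := fun x => f (z + x) - f z) (M := 2 * M + ε / 4)
      (R := 3 * d / 4) (z := w - z) (by positivity) hdiff (fun x hx => ?_) (by positivity)
      (by rw [mem_ball_zero_iff]; linarith) (by simp)
    · simp only [add_sub_cancel] at h1
      refine h1.trans ?_
      rw [div_le_iff₀ (by linarith)]
      nlinarith [norm_nonneg (w - z)]
    · have h2 := hu (z + x) (by simpa using hx)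
      have h3 := hu z (Metric.mem_ball_self (by positivity))
      simp only [Complex.sub_re, mem_ofPred_eq]
      rw [abs_le] at h2 h3
      linarith [h2.2, h3.1]
  calc ‖f w - f z‖ ^ p * d ^ 2 ≤ (8 * M) ^ p * d ^ 2 := by gcongr
    _ = 8 ^ p * (16 * A) * i := by
      rw [Real.mul_rpow (by norm_num) hM0, hMp]; field_simp

/-! ### Absorption along a radius -/

theorem add_rpow_le_split {p δ a b : ℝ} (hp : 0 < p) (hδ : 0 < δ) (ha : 0 ≤ a) (hb : 0 ≤ b) :
    (a + b) ^ p ≤ (1 + δ) ^ p * a ^ p + (1 + δ⁻¹) ^ p * b ^ p := by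
  rcases le_total b (δ * a) with h | h
  · have : (a + b) ^ p ≤ ((1 + δ) * a) ^ p :=
      Real.rpow_le_rpow (by positivity) (by linarith) hp.le
    rw [Real.mul_rpow (by positivity) ha] at this
    have h2 : 0 ≤ (1 + δ⁻¹) ^ p * b ^ p := by positivity
    linarith
  · have h1 : a ≤ δ⁻¹ * b := by rw [inv_mul_eq_div, le_div_iff₀ hδ]; linarith
    have : (a + b) ^ p ≤ ((1 + δ⁻¹) * b) ^ p :=
      Real.rpow_le_rpow (by positivity) (by linarith) hp.le
    rw [Real.mul_rpow (by positivity) hb] at this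
    have h2 : 0 ≤ (1 + δ) ^ p * a ^ p := by positivity
    linarith

/-- One-dimensional absorption. If `g` at `r` is at most `α` times `g` at the inner point
`(1 + κ) r - κ` plus `h r`, and the weight `V` loses a factor `q` under the inverse change of
variables, then `α q < 1` lets the weighted integral of `g` be absorbed. Finiteness on `[0, R)`
justifies the subtraction; then `R → 1`. -/
theorem hardy_one_dim {κ q α : ℝ} (hκ : 0 < κ) (hq : 0 ≤ q) (hα : 0 ≤ α) (hαq : α * q < 1)
    {V g h : ℝ → ENNReal} (hVm : Measurable V) (hgm : Measurable g) {B : ENNReal}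
    (hg0 : ∀ r ∈ Ico 0 (κ / (1 + κ)), g r ≤ B)
    (hg : ∀ r ∈ Ico (κ / (1 + κ)) 1, g r ≤ ENNReal.ofReal α * g ((1 + κ) * r - κ) + h r)
    (hV : ∀ s ∈ Ico (0:ℝ) 1, V ((s + κ) / (1 + κ)) ≤ ENNReal.ofReal ((1 + κ) * q) * V s)
    (hfin : ∀ R < 1, ∫⁻ r in Ico 0 R, g r * V r < ⊤) :
    ∫⁻ r in Ico (0:ℝ) 1, g r * V r ≤ ENNReal.ofReal ((1 - α * q)⁻¹) *
      (B * (∫⁻ r in Ico 0 (κ / (1 + κ)), V r) + (∫⁻ r in Ico (κ / (1 + κ)) 1, h r * V r)) := by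
  set r0 := κ / (1 + κ) with hr0
  have hr0p : 0 < r0 := by positivity
  have hr01 : r0 < 1 := by rw [hr0, div_lt_one (by positivity)]; linarith
  have hk : (1 + κ) * r0 = κ := by rw [hr0]; field_simp
  set X := B * (∫⁻ r in Ico 0 r0, V r) + (∫⁻ r in Ico r0 1, h r * V r) with hX
  have key : ∀ R, r0 < R → R < 1 →
      ∫⁻ r in Ico 0 R, g r * V r ≤ ENNReal.ofReal ((1 - α * q)⁻¹) * X := by
    intro R hR hR1
    set J := ∫⁻ r in Ico 0 R, g r * V r with hJ
    have hJfin : J < ⊤ := hfin R hR1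
    have hcv : ENNReal.ofReal (1 + κ) * ∫⁻ r in Ico r0 R, g ((1 + κ) * r - κ) * V r ≤
        ENNReal.ofReal (1 + κ) * (ENNReal.ofReal q * J) := by
      have himg := lintegral_image_eq_lintegral_abs_deriv_mul (s := Ico r0 R)
        (f := fun r => (1 + κ) * r - κ) (f' := fun _ => 1 + κ) measurableSet_Ico
        (fun x _ => by
          simpa using (((hasDerivAt_id x).const_mul (1 + κ)).sub_const κ).hasDerivWithinAt)
        (fun x _ y _ hxy => by
          have : (1 + κ) * x = (1 + κ) * y := by simpa using hxy
          exact mul_left_cancel₀ (by positivity) this)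
        (fun s => g s * V ((s + κ) / (1 + κ)))
      have e : ∀ r, ((1 + κ) * r - κ + κ) / (1 + κ) = r := fun r => by field_simp; ring
      simp only [e, abs_of_pos (by positivity : 0 < 1 + κ)] at himg
      rw [lintegral_const_mul' _ _ ENNReal.ofReal_ne_top] at himg
      rw [← himg]
      calc _ ≤ ∫⁻ s in Ico 0 R, g s * V ((s + κ) / (1 + κ)) := by
            apply lintegral_mono_set
            rintro _ ⟨x, hx, rfl⟩
            refine ⟨?_, ?_⟩
            · have : (1 + κ) * r0 ≤ (1 + κ) * x := by gcongr; exact hx.1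
              simp only; linarith
            · have := hx.2
              simp only; nlinarith
        _ ≤ ∫⁻ s in Ico 0 R, ENNReal.ofReal ((1 + κ) * q) * (g s * V s) := by
            refine setLIntegral_mono' measurableSet_Ico fun s hs => ?_
            rw [mul_left_comm]
            gcongr
            exact hV s ⟨hs.1, hs.2.trans hR1⟩
        _ = _ := by
            rw [lintegral_const_mul' _ _ ENNReal.ofReal_ne_top, ENNReal.ofReal_mul (by positivity),
              mul_assoc]
    have hcv2 := (ENNReal.mul_le_mul_iff_right (by simp; positivity) ENNReal.ofReal_ne_top).1 hcv
    have hsplit : J ≤ X + ENNReal.ofReal (α * q) * J := by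
      calc J = (∫⁻ r in Ico 0 r0, g r * V r) + (∫⁻ r in Ico r0 R, g r * V r) := by
            rw [hJ, ← Ico_union_Ico_eq_Ico hr0p.le hR.le,
              lintegral_union measurableSet_Ico (by simp)]
        _ ≤ B * (∫⁻ r in Ico 0 r0, V r) + ∫⁻ r in Ico r0 R,
              (ENNReal.ofReal α * (g ((1 + κ) * r - κ) * V r) + h r * V r) := by
            gcongr ?_ + ?_
            · rw [← lintegral_const_mul _ hVm]
              refine setLIntegral_mono' measurableSet_Ico fun s hs => ?_
              gcongr
              exact hg0 s hs
            · refine setLIntegral_mono' measurableSet_Ico fun s hs => ?_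
              rw [← mul_assoc, ← add_mul]
              gcongr
              exact hg s ⟨hs.1, hs.2.trans hR1⟩
        _ = B * (∫⁻ r in Ico 0 r0, V r) + (ENNReal.ofReal α * (∫⁻ r in Ico r0 R,
              g ((1 + κ) * r - κ) * V r) + (∫⁻ r in Ico r0 R, h r * V r)) := by
            rw [lintegral_add_left (by fun_prop), lintegral_const_mul' _ _ ENNReal.ofReal_ne_top]
        _ ≤ B * (∫⁻ r in Ico 0 r0, V r) + (ENNReal.ofReal α * (ENNReal.ofReal q * J) +
              (∫⁻ r in Ico r0 1, h r * V r)) := by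
            gcongr
        _ = _ := by
            rw [hX, ENNReal.ofReal_mul hα]; ring
    by_cases hXt : X = ⊤
    · rw [hXt, ENNReal.mul_top]
      · exact le_top
      · simp only [ne_eq, ENNReal.ofReal_eq_zero, not_le, inv_pos]; linarith
    rw [← ENNReal.ofReal_toReal hXt, ← ENNReal.ofReal_toReal hJfin.ne,
      ← ENNReal.ofReal_mul (by positivity), ← ENNReal.ofReal_add (by positivity) (by positivity),
      ENNReal.ofReal_le_ofReal_iff (by positivity)] at hsplit
    rw [← ENNReal.ofReal_toReal hXt, ← ENNReal.ofReal_toReal hJfin.ne,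
      ← ENNReal.ofReal_mul (by rw [inv_nonneg]; linarith)]
    apply ENNReal.ofReal_le_ofReal
    rw [inv_mul_eq_div, le_div_iff₀ (by linarith)]
    linarith
  have hU : Ico (0:ℝ) 1 = ⋃ n : ℕ, Ico (0:ℝ) (1 - (1 - r0) / (n + 2)) := by
    ext x
    simp only [mem_Ico, mem_iUnion, exists_and_left]
    refine and_congr_right fun hx => ⟨fun hx1 => ?_, fun ⟨n, hn⟩ => ?_⟩
    · obtain ⟨n, hn⟩ := exists_nat_gt ((1 - r0) / (1 - x))
      refine ⟨n, ?_⟩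
      rw [div_lt_iff₀ (by linarith)] at hn
      rw [lt_sub_comm, div_lt_iff₀ (by positivity)]
      nlinarith
    · have : 0 < (1 - r0) / ((n:ℝ) + 2) := div_pos (by linarith) (by positivity)
      linarith
  rw [hU, setLIntegral_iUnion_of_directed]
  · refine iSup_le fun n => key _ ?_ ?_
    · rw [lt_sub_comm, div_lt_iff₀ (by positivity)]
      have : (0:ℝ) ≤ n := by positivity
      nlinarith
    · have : 0 < (1 - r0) / ((n:ℝ) + 2) := div_pos (by linarith) (by positivity)
      linarith
  · refine Monotone.directed_le fun m n hmn => ?_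
    apply Ico_subset_Ico_right
    have : (1 - r0) / ((n:ℝ) + 2) ≤ (1 - r0) / ((m:ℝ) + 2) := by
      gcongr
    linarith

/-! ### Averages over Whitney discs -/

/-- The mean of `U` over the Whitney disc of centre `z` and radius `η (1 - |z|)`, up to the factor `π`
of the area of that disc. -/
noncomputable def whitneyAvg (η : ℝ) (U : ℂ → ENNReal) (z : ℂ) : ENNReal :=
  ENNReal.ofReal (((η * (1 - ‖z‖)) ^ 2)⁻¹) * ∫⁻ x in Metric.ball z (η * (1 - ‖z‖)), U x

theorem measurableSet_whitney (η : ℝ) :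
    MeasurableSet {q : ℂ × ℂ | dist q.2 q.1 < η * (1 - ‖q.1‖)} :=
  (isOpen_lt (by fun_prop) (by fun_prop)).measurableSet

theorem measurable_whitneyAvg (η : ℝ) {U : ℂ → ENNReal} (hU : Measurable U) :
    Measurable (whitneyAvg η U) := by
  have h1 : Measurable fun z : ℂ => ∫⁻ x in Metric.ball z (η * (1 - ‖z‖)), U x := by
    have h2 : Measurable fun z : ℂ => ∫⁻ x, ({q : ℂ × ℂ | dist q.2 q.1 < η * (1 - ‖q.1‖)}.indicator
        (fun q => U q.2)) (z, x) :=
      ((hU.comp measurable_snd).indicator (measurableSet_whitney η)).lintegral_prod_right'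
    convert h2 using 2 with z
    rw [← lintegral_indicator Metric.isOpen_ball.measurableSet]
    rfl
  unfold whitneyAvg
  exact (by fun_prop : Measurable fun z : ℂ => ENNReal.ofReal (((η * (1 - ‖z‖)) ^ 2)⁻¹)).mul h1

/-- Fubini over Whitney discs: if `V` is almost constant on them, averaging over them is bounded in
the weighted `L¹` norm. -/
theorem lintegral_whitneyAvg_le {η K : ℝ} (hη : 0 < η) (hη2 : η ≤ 1 / 2) (hK : 0 < K)
    {U : ℂ → ENNReal} (hU : Measurable U) {V : ℝ → ENNReal} (hV : Measurable V)
    (hloc : ∀ r ∈ Ico (0:ℝ) 1, ∀ t ∈ Ico (0:ℝ) 1, |r - t| ≤ η * (1 - r) →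
      V r ≤ ENNReal.ofReal K * V t) :
    ∫⁻ z in Metric.ball (0:ℂ) 1, whitneyAvg η U z * V ‖z‖ ≤
      ENNReal.ofReal (4 * K * Real.pi / η ^ 2) * ∫⁻ x in Metric.ball (0:ℂ) 1, U x * V ‖x‖ := by
  set S := {q : ℂ × ℂ | dist q.2 q.1 < η * (1 - ‖q.1‖)} with hS
  set T : ℂ × ℂ → ENNReal := S.indicator
    (fun q => ENNReal.ofReal (((η * (1 - ‖q.1‖)) ^ 2)⁻¹) * U q.2 * V ‖q.1‖) with hT
  have hTm : Measurable T := by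
    refine Measurable.indicator ?_ (measurableSet_whitney η)
    fun_prop
  have e1 : ∀ z : ℂ, whitneyAvg η U z * V ‖z‖ = ∫⁻ x, T (z, x) := by
    intro z
    have : ∀ x, T (z, x) = ENNReal.ofReal (((η * (1 - ‖z‖)) ^ 2)⁻¹) *
        (Metric.ball z (η * (1 - ‖z‖))).indicator U x * V ‖z‖ := by
      intro x
      by_cases hx : x ∈ Metric.ball z (η * (1 - ‖z‖))
      · rw [indicator_of_mem hx, hT, indicator_of_mem]
        exact hx
      · rw [indicator_of_notMem hx, hT, indicator_of_notMem]
        · simp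
        · exact hx
    simp_rw [this]
    rw [lintegral_mul_const, lintegral_const_mul' _ _ ENNReal.ofReal_ne_top,
      lintegral_indicator Metric.isOpen_ball.measurableSet]
    · rfl
    · exact (hU.indicator Metric.isOpen_ball.measurableSet).const_mul _
  simp_rw [e1]
  rw [lintegral_lintegral_swap (by exact hTm.aemeasurable),
    ← lintegral_const_mul' _ _ ENNReal.ofReal_ne_top,
    ← lintegral_indicator Metric.isOpen_ball.measurableSet]
  refine lintegral_mono fun x => ?_
  by_cases hx : x ∈ Metric.ball (0:ℂ) 1
  · rw [indicator_of_mem hx]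
    have hx1 : ‖x‖ < 1 := mem_ball_zero_iff.1 hx
    have hvol : volume (Metric.ball x (1 - ‖x‖)) = ENNReal.ofReal (Real.pi * (1 - ‖x‖) ^ 2) := by
      rw [Complex.volume_ball, mul_comm Real.pi, ENNReal.ofReal_mul (by positivity),
        ENNReal.ofReal_pow (by linarith), ← NNReal.coe_real_pi, ENNReal.ofReal_coe_nnreal]
    have hpos : 0 < 1 - ‖x‖ := by linarith
    calc ∫⁻ z in Metric.ball (0:ℂ) 1, T (z, x)
        ≤ ∫⁻ z in Metric.ball (0:ℂ) 1, (Metric.ball x (1 - ‖x‖)).indicator (fun _ =>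
          ENNReal.ofReal (4 * K / (η ^ 2 * (1 - ‖x‖) ^ 2)) * (U x * V ‖x‖)) z := by
          refine setLIntegral_mono' Metric.isOpen_ball.measurableSet fun z hz => ?_
          have hz1 : ‖z‖ < 1 := mem_ball_zero_iff.1 hz
          by_cases hzx : (z, x) ∈ S
          · have hd : dist x z < η * (1 - ‖z‖) := hzx
            have hn : |‖z‖ - ‖x‖| ≤ dist x z := by
              rw [dist_comm, dist_eq_norm]; exact abs_norm_sub_norm_le z x
            obtain ⟨hn1, hn2⟩ := abs_le.1 hn
            rw [hT, indicator_of_mem hzx, indicator_of_mem]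
            · have h1 := hloc ‖z‖ ⟨norm_nonneg _, hz1⟩ ‖x‖ ⟨norm_nonneg _, hx1⟩ (hn.trans hd.le)
              have h2 : ((η * (1 - ‖z‖)) ^ 2)⁻¹ ≤ 4 / (η ^ 2 * (1 - ‖x‖) ^ 2) := by
                have h3 : 1 - ‖x‖ ≤ 2 * (1 - ‖z‖) := by nlinarith
                have h4 : (1 - ‖x‖) ^ 2 ≤ (2 * (1 - ‖z‖)) ^ 2 := by gcongr
                have hzp : 0 < 1 - ‖z‖ := by linarith
                rw [inv_eq_one_div, div_le_div_iff₀ (by positivity) (by positivity)]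
                have : 0 < η ^ 2 := by positivity
                nlinarith
              calc ENNReal.ofReal (((η * (1 - ‖z‖)) ^ 2)⁻¹) * U x * V ‖z‖
                  ≤ ENNReal.ofReal (4 / (η ^ 2 * (1 - ‖x‖) ^ 2)) * U x *
                    (ENNReal.ofReal K * V ‖x‖) := by gcongr
                _ = (ENNReal.ofReal (4 / (η ^ 2 * (1 - ‖x‖) ^ 2)) * ENNReal.ofReal K) *
                    (U x * V ‖x‖) := by ring
                _ = _ := by
                    rw [← ENNReal.ofReal_mul (by positivity), div_mul_eq_mul_div]
            · rw [Metric.mem_ball, dist_comm]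
              nlinarith
          · rw [hT, indicator_of_notMem hzx]; exact zero_le
      _ ≤ ∫⁻ z, (Metric.ball x (1 - ‖x‖)).indicator (fun _ =>
          ENNReal.ofReal (4 * K / (η ^ 2 * (1 - ‖x‖) ^ 2)) * (U x * V ‖x‖)) z :=
          setLIntegral_le_lintegral _ _
      _ = ENNReal.ofReal (4 * K * Real.pi / η ^ 2) * (U x * V ‖x‖) := by
          rw [lintegral_indicator Metric.isOpen_ball.measurableSet, setLIntegral_const, hvol,
            mul_right_comm, ← ENNReal.ofReal_mul (by positivity)]
          congr 2
          field_simp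
  · rw [indicator_of_notMem hx, nonpos_iff_eq_zero, lintegral_eq_zero_iff (by fun_prop)]
    filter_upwards [ae_restrict_mem Metric.isOpen_ball.measurableSet] with z hz
    rw [hT, indicator_of_notMem]
    · rfl
    · intro hzx
      have hd : dist x z < η * (1 - ‖z‖) := hzx
      have hz1 : ‖z‖ < 1 := mem_ball_zero_iff.1 hz
      have hn : |‖z‖ - ‖x‖| ≤ dist x z := by
        rw [dist_comm, dist_eq_norm]; exact abs_norm_sub_norm_le z x
      obtain ⟨hn1, hn2⟩ := abs_le.1 hn
      apply hx
      rw [mem_ball_zero_iff]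
      nlinarith

/-! ### The inequality for an abstract weight -/

/-- Polar coordinates with the Jacobian `r ≤ 1` dropped. -/
theorem lintegral_ball_le_polar {F : ℂ → ENNReal} (hF : Measurable F) :
    ∫⁻ z in Metric.ball (0:ℂ) 1, F z ≤ ∫⁻ θ in Ioo (-Real.pi) Real.pi,
      ∫⁻ r in Ico (0:ℝ) 1, F (circleMap 0 r θ) := by
  rw [← lintegral_indicator Metric.isOpen_ball.measurableSet,
    lintegral_polar (hF.indicator Metric.isOpen_ball.measurableSet)]
  refine lintegral_mono fun θ => ?_
  simp only
  rw [← lintegral_indicator measurableSet_Ioi, ← lintegral_indicator measurableSet_Ico]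
  refine lintegral_mono fun r => ?_
  by_cases hr : r ∈ Ioo (0:ℝ) 1
  · rw [indicator_of_mem (mem_Ioi.2 hr.1), indicator_of_mem (mem_Ico.2 ⟨hr.1.le, hr.2⟩),
      indicator_of_mem]
    · exact mul_le_of_le_one_left zero_le (by simpa using hr.2.le)
    · simpa [abs_of_pos hr.1] using hr.2
  · by_cases hr0 : r ∈ Ioi (0:ℝ)
    · rw [indicator_of_mem hr0, indicator_of_notMem]
      · simp
      · simp only [mem_ball_zero_iff, norm_circleMap_zero, abs_of_pos (mem_Ioi.1 hr0)]
        exact fun h => hr ⟨hr0, h⟩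
    · rw [indicator_of_notMem hr0]; exact zero_le

/-- Polar coordinates away from the origin, where the Jacobian is at least `r₀`. -/
theorem polar_le_lintegral_ball {F : ℂ → ENNReal} (hF : Measurable F) {r₀ : ℝ} (hr₀ : 0 < r₀) :
    ∫⁻ θ in Ioo (-Real.pi) Real.pi, ∫⁻ r in Ico r₀ 1, F (circleMap 0 r θ) ≤
      ENNReal.ofReal r₀⁻¹ * ∫⁻ z in Metric.ball (0:ℂ) 1, F z := by
  rw [← lintegral_indicator Metric.isOpen_ball.measurableSet,
    lintegral_polar (hF.indicator Metric.isOpen_ball.measurableSet),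
    ← lintegral_const_mul' _ _ ENNReal.ofReal_ne_top]
  refine lintegral_mono fun θ => ?_
  simp only
  rw [← lintegral_const_mul' _ _ ENNReal.ofReal_ne_top, ← lintegral_indicator measurableSet_Ioi,
    ← lintegral_indicator measurableSet_Ico]
  refine lintegral_mono fun r => ?_
  by_cases hr : r ∈ Ico r₀ 1
  · have hrp : 0 < r := hr₀.trans_le hr.1
    rw [indicator_of_mem hr, indicator_of_mem (mem_Ioi.2 hrp), indicator_of_mem, ← mul_assoc,
      ← ENNReal.ofReal_mul (by positivity)]
    · refine le_mul_of_one_le_left zero_le ?_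
      rw [ENNReal.one_le_ofReal, inv_mul_eq_div, one_le_div hr₀]
      exact hr.1
    · simpa [abs_of_pos hrp] using hr.2
  · rw [indicator_of_notMem hr]; exact zero_le

theorem ofReal_le_of_mul_le {x s : ℝ} (hs : 0 < s) {E : ENNReal}
    (h : ENNReal.ofReal (x * s) ≤ E) : ENNReal.ofReal x ≤ ENNReal.ofReal s⁻¹ * E := by
  calc ENNReal.ofReal x = ENNReal.ofReal s⁻¹ * ENNReal.ofReal (x * s) := by
        rw [← ENNReal.ofReal_mul (by positivity)]; congr 1; field_simp
    _ ≤ _ := by gcongr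

/-- The hard inequality for an abstract radial weight `V` that is almost constant on Whitney discs
(`hloc`) and satisfies the contraction property `hcontr` along radii. On each radius, `hardy_one_dim`
is applied to `g r = |f (r e^{iθ})| ^ p`, with `h` a multiple of the Whitney average of `|Re f| ^ p`;
integrating over `θ` and using `lintegral_whitneyAvg_le` concludes. -/
theorem analytic_le_re (p : ℝ) (hp : 0 < p) {η q : ℝ} (hη : 0 < η) (hη2 : η ≤ 1 / 2)
    {K : ℝ} (hK : 0 < K) (hq : 0 < q) (hq1 : q < 1) {V : ℝ → ENNReal} (hVm : Measurable V)
    (hV0 : V 0 ≠ 0) (hVb : ∀ R < 1, ∃ B : ℝ, ∀ r ∈ Ico 0 R, V r ≤ ENNReal.ofReal B)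
    (hloc : ∀ r ∈ Ico (0:ℝ) 1, ∀ t ∈ Ico (0:ℝ) 1, |r - t| ≤ η * (1 - r) →
      V r ≤ ENNReal.ofReal K * V t)
    (hcontr : ∀ s ∈ Ico (0:ℝ) 1, V ((s + η / 2) / (1 + η / 2)) ≤
      ENNReal.ofReal ((1 + η / 2) * q) * V s) :
    ∃ C : ENNReal, C ≠ ⊤ ∧ ∀ f : ℂ → ℂ, Measurable f →
      DifferentiableOn ℂ f (Metric.ball (0:ℂ) 1) → (f 0).im = 0 →
      ∫⁻ z in Metric.ball (0:ℂ) 1, ENNReal.ofReal (‖f z‖ ^ p) * V ‖z‖ ≤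
        C * ∫⁻ z in Metric.ball (0:ℂ) 1, ENNReal.ofReal (|(f z).re| ^ p) * V ‖z‖ := by
  obtain ⟨CA, hCA, hA⟩ := re_pow_le p hp
  obtain ⟨CO, hCO, hO⟩ := osc_pow_le p hp
  set κ := η / 2 with hκ
  have hκp : 0 < κ := by positivity
  -- `δ` is chosen so that `(1 + δ) ^ p * q = q ^ (1 / 2) < 1`
  obtain ⟨δ, hδ, hδq⟩ : ∃ δ : ℝ, 0 < δ ∧ (1 + δ) ^ p * q < 1 := by
    refine ⟨q ^ (-(1 / (2 * p))) - 1, ?_, ?_⟩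
    · have : 1 < q ^ (-(1 / (2 * p))) :=
        Real.one_lt_rpow_of_pos_of_lt_one_of_neg hq hq1 (by simp; positivity)
      linarith
    · rw [add_sub_cancel, ← Real.rpow_mul hq.le]
      have : -(1 / (2 * p)) * p = -(1 / 2) := by field_simp
      rw [this]
      calc q ^ (-(1 / 2) : ℝ) * q = q ^ (-(1 / 2) + 1 : ℝ) := by rw [Real.rpow_add_one hq.ne']
        _ < 1 := Real.rpow_lt_one hq.le hq1 (by norm_num)
  set r0 := κ / (1 + κ) with hr0
  have hr0p : 0 < r0 := by positivity
  have hr01 : r0 < 1 := by rw [hr0, div_lt_one (by positivity)]; linarith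
  have hr0κ : r0 ≤ κ := by rw [hr0]; exact div_le_self hκp.le (by linarith)
  have hk : (1 + κ) * r0 = κ := by rw [hr0]; field_simp
  set v0 := ∫⁻ r in Ico 0 r0, V r with hv0
  have hv0t : v0 ≠ ⊤ := by
    obtain ⟨B, hB⟩ := hVb r0 hr01
    refine ne_top_of_le_ne_top ?_ (setLIntegral_mono' measurableSet_Ico hB)
    rw [setLIntegral_const]
    exact ENNReal.mul_ne_top ENNReal.ofReal_ne_top (by simp)
  have hV0t : V 0 ≠ ⊤ := by
    obtain ⟨B, hB⟩ := hVb r0 hr01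
    exact ne_top_of_le_ne_top ENNReal.ofReal_ne_top (hB 0 ⟨le_rfl, hr0p⟩)
  set c1 := ENNReal.ofReal ((1 - (1 + δ) ^ p * q)⁻¹) with hc1
  set cB := ENNReal.ofReal ((η ^ 2)⁻¹) * (ENNReal.ofReal (2 ^ p) * ENNReal.ofReal CA +
    ENNReal.ofReal (2 ^ p) * ENNReal.ofReal CO) with hcB
  set ch := ENNReal.ofReal ((1 + δ⁻¹) ^ p) * ENNReal.ofReal CO with hch
  set c4 := ENNReal.ofReal (4 * K * Real.pi / η ^ 2) with hc4
  have hcht : ch ≠ ⊤ := by rw [hch]; finiteness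
  refine ⟨c1 * (cB * v0 * ENNReal.ofReal (2 * Real.pi) * ((V 0)⁻¹ * ENNReal.ofReal K) +
    ch * (ENNReal.ofReal r0⁻¹ * c4)), ?_, fun f hfm hf hf0 => ?_⟩
  · have hinv : (V 0)⁻¹ ≠ ⊤ := ENNReal.inv_ne_top.2 hV0
    finiteness
  set U : ℂ → ENNReal := fun z => ENNReal.ofReal (|(f z).re| ^ p) with hU
  set G : ℂ → ENNReal := fun z => ENNReal.ofReal (‖f z‖ ^ p) with hG
  have hUm : Measurable U :=
    (((Complex.measurable_re.comp hfm).abs).pow_const p).ennreal_ofReal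
  have hGm : Measurable G := (hfm.norm.pow_const p).ennreal_ofReal
  set Y := ∫⁻ z in Metric.ball (0:ℂ) 1, U z * V ‖z‖ with hY
  set A := ∫⁻ x in Metric.ball (0:ℂ) η, U x with hAdef
  have hAY : A ≤ (V 0)⁻¹ * ENNReal.ofReal K * Y := by
    have h1 : V 0 * A ≤ ENNReal.ofReal K * Y := by
      rw [hAdef, hY, ← lintegral_const_mul _ hUm, ← lintegral_const_mul' _ _ ENNReal.ofReal_ne_top]
      refine (setLIntegral_mono' Metric.isOpen_ball.measurableSet fun x hx => ?_).trans
        (lintegral_mono_set (Metric.ball_subset_ball (by linarith : η ≤ 1)))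
      have hx' := mem_ball_zero_iff.1 hx
      rw [mul_comm, mul_left_comm]
      gcongr
      refine hloc 0 (by simp) ‖x‖ ⟨norm_nonneg _, by linarith⟩ ?_
      simpa using hx'.le
    calc A = (V 0)⁻¹ * (V 0 * A) := by
          rw [← mul_assoc, ENNReal.inv_mul_cancel hV0 hV0t, one_mul]
      _ ≤ (V 0)⁻¹ * (ENNReal.ofReal K * Y) := by gcongr
      _ = _ := by ring
  have hcirc : ∀ θ : ℝ, Measurable fun r : ℝ => circleMap 0 r θ := fun θ => by
    unfold circleMap; fun_prop
  have hcb : ∀ (z : ℂ), ‖z‖ < 1 → DifferentiableOn ℂ f (Metric.closedBall z (η * (1 - ‖z‖))) := by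
    intro z hz
    refine hf.mono fun x hx => ?_
    have h1 := Metric.mem_closedBall.1 hx
    have h2 : ‖x‖ ≤ ‖z‖ + dist x z := by
      rw [dist_eq_norm]; calc ‖x‖ = ‖z + (x - z)‖ := by congr 1; ring
        _ ≤ _ := norm_add_le _ _
    rw [mem_ball_zero_iff]
    nlinarith
  -- near the origin `|f| ^ p` is controlled by the mean of `|Re f| ^ p`
  have P1 : ∀ z : ℂ, ‖z‖ < r0 → G z ≤ cB * A := by
    intro z hz
    have hd0 : DifferentiableOn ℂ f (Metric.closedBall 0 η) := by simpa using hcb 0 (by simp)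
    have h1 := ofReal_le_of_mul_le (by positivity)
      (hO f hfm 0 η hη hd0 z (by rw [dist_zero_right]; linarith))
    have h2 := hA f hfm 0 η hη hd0 0 (by simpa using hη.le)
    rw [dist_self, sub_zero] at h2
    have h3 := ofReal_le_of_mul_le (by positivity) h2
    have hre : |(f 0).re| = ‖f 0‖ := by
      rw [Complex.abs_re_eq_norm.2 hf0]
    rw [hre] at h3
    have h4 := add_rpow_le_split hp one_pos (norm_nonneg (f 0)) (norm_nonneg (f z - f 0))
    norm_num at h4
    calc G z ≤ ENNReal.ofReal (2 ^ p * ‖f 0‖ ^ p + 2 ^ p * ‖f z - f 0‖ ^ p) := by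
          apply ENNReal.ofReal_le_ofReal
          refine le_trans ?_ h4
          apply Real.rpow_le_rpow (norm_nonneg _) _ hp.le
          calc ‖f z‖ = ‖f 0 + (f z - f 0)‖ := by congr 1; ring
            _ ≤ _ := norm_add_le _ _
      _ = ENNReal.ofReal (2 ^ p) * ENNReal.ofReal (‖f 0‖ ^ p) +
          ENNReal.ofReal (2 ^ p) * ENNReal.ofReal (‖f z - f 0‖ ^ p) := by
          rw [ENNReal.ofReal_add (by positivity) (by positivity), ENNReal.ofReal_mul (by positivity),
            ENNReal.ofReal_mul (by positivity)]
      _ ≤ ENNReal.ofReal (2 ^ p) * (ENNReal.ofReal (η ^ 2)⁻¹ * (ENNReal.ofReal CA * A)) +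
          ENNReal.ofReal (2 ^ p) * (ENNReal.ofReal (η ^ 2)⁻¹ * (ENNReal.ofReal CO * A)) := by
          gcongr
      _ = _ := by rw [hcB]; ring
  have P2 : ∀ θ : ℝ, ∀ r ∈ Ico r0 1, G (circleMap 0 r θ) ≤
      ENNReal.ofReal ((1 + δ) ^ p) * G (circleMap 0 ((1 + κ) * r - κ) θ) +
        ch * whitneyAvg η U (circleMap 0 r θ) := by
    intro θ r hr
    have hrp : 0 < r := hr0p.trans_le hr.1
    have hr1 : 0 < 1 - r := by linarith [hr.2]
    set z := circleMap 0 r θ with hz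
    set z' := circleMap 0 ((1 + κ) * r - κ) θ with hz'
    have hzn : ‖z‖ = r := by simp [hz, abs_of_pos hrp]
    have hdist : dist z' z ≤ η * (1 - ‖z‖) / 2 := by
      have : z' - z = circleMap 0 (κ * (r - 1)) θ := by
        rw [hz, hz']; simp only [circleMap]; push_cast; ring
      rw [dist_eq_norm, this, norm_circleMap_zero, hzn, abs_mul, abs_of_pos hκp,
        abs_of_neg (by linarith), hκ]
      linarith
    have hdp : 0 < η * (1 - ‖z‖) := by rw [hzn]; positivity
    have h1 := ofReal_le_of_mul_le (by positivity)
      (hO f hfm z _ hdp (hcb z (by linarith)) z' hdist)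
    have h4 := add_rpow_le_split hp hδ (norm_nonneg (f z')) (norm_nonneg (f z' - f z))
    calc G z ≤ ENNReal.ofReal ((1 + δ) ^ p * ‖f z'‖ ^ p + (1 + δ⁻¹) ^ p * ‖f z' - f z‖ ^ p) := by
          apply ENNReal.ofReal_le_ofReal
          refine le_trans ?_ h4
          apply Real.rpow_le_rpow (norm_nonneg _) _ hp.le
          calc ‖f z‖ = ‖f z' - (f z' - f z)‖ := by congr 1; ring
            _ ≤ _ := norm_sub_le _ _
      _ = ENNReal.ofReal ((1 + δ) ^ p) * G z' +
          ENNReal.ofReal ((1 + δ⁻¹) ^ p) * ENNReal.ofReal (‖f z' - f z‖ ^ p) := by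
          rw [ENNReal.ofReal_add (by positivity) (by positivity), ENNReal.ofReal_mul (by positivity),
            ENNReal.ofReal_mul (by positivity)]
      _ ≤ ENNReal.ofReal ((1 + δ) ^ p) * G z' + ENNReal.ofReal ((1 + δ⁻¹) ^ p) *
          (ENNReal.ofReal (((η * (1 - ‖z‖)) ^ 2)⁻¹) * (ENNReal.ofReal CO *
            ∫⁻ x in Metric.ball z (η * (1 - ‖z‖)), U x)) := by gcongr
      _ = _ := by rw [hch, whitneyAvg]; ring
  have hfin : ∀ θ : ℝ, ∀ R < 1, ∫⁻ r in Ico 0 R, G (circleMap 0 r θ) * V r < ⊤ := by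
    intro θ R hR
    obtain ⟨B, hB⟩ := hVb R hR
    obtain ⟨M, hM⟩ := (isCompact_closedBall (0:ℂ) R).exists_bound_of_continuousOn
      (hf.continuousOn.mono (Metric.closedBall_subset_ball hR))
    refine lt_of_le_of_lt (setLIntegral_mono' measurableSet_Ico
      (g := fun _ => ENNReal.ofReal (M ^ p) * ENNReal.ofReal B) fun r hr => ?_) ?_
    · refine mul_le_mul' (ENNReal.ofReal_le_ofReal ?_) (hB r hr)
      refine Real.rpow_le_rpow (norm_nonneg _) (hM _ ?_) hp.le
      simpa [abs_of_nonneg hr.1] using hr.2.le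
    · rw [setLIntegral_const]
      exact ENNReal.mul_lt_top (ENNReal.mul_lt_top ENNReal.ofReal_lt_top ENNReal.ofReal_lt_top)
        (by simp)
  have hslice : ∀ θ : ℝ, ∫⁻ r in Ico (0:ℝ) 1, G (circleMap 0 r θ) * V r ≤
      c1 * (cB * A * v0 + ch * ∫⁻ r in Ico r0 1, whitneyAvg η U (circleMap 0 r θ) * V r) := by
    intro θ
    have h := hardy_one_dim (h := fun r => ch * whitneyAvg η U (circleMap 0 r θ)) hκp hq.le
      (by positivity) hδq hVm (hGm.comp (hcirc θ))
      (B := cB * A) (fun r hr => P1 _ (by simpa [abs_of_nonneg hr.1] using hr.2))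
      (P2 θ) hcontr (hfin θ)
    have e : ∫⁻ r in Ico r0 1, ch * whitneyAvg η U (circleMap 0 r θ) * V r =
        ch * ∫⁻ r in Ico r0 1, whitneyAvg η U (circleMap 0 r θ) * V r := by
      simp_rw [mul_assoc]
      exact lintegral_const_mul' _ _ hcht
    rw [← e]
    exact h
  have hWm : Measurable fun z : ℂ => whitneyAvg η U z * V ‖z‖ :=
    (measurable_whitneyAvg η hUm).mul (hVm.comp measurable_norm)
  have hpolar : ∫⁻ θ in Ioo (-Real.pi) Real.pi, ∫⁻ r in Ico r0 1,
      whitneyAvg η U (circleMap 0 r θ) * V r ≤ ENNReal.ofReal r0⁻¹ * (c4 * Y) := by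
    calc _ = ∫⁻ θ in Ioo (-Real.pi) Real.pi, ∫⁻ r in Ico r0 1,
          whitneyAvg η U (circleMap 0 r θ) * V ‖circleMap 0 r θ‖ := by
          refine lintegral_congr fun θ => setLIntegral_congr_fun measurableSet_Ico fun r hr => ?_
          simp [abs_of_nonneg (hr0p.le.trans hr.1)]
      _ ≤ _ := polar_le_lintegral_ball hWm hr0p
      _ ≤ _ := by gcongr; exact lintegral_whitneyAvg_le hη hη2 hK hUm hVm hloc
  calc ∫⁻ z in Metric.ball (0:ℂ) 1, G z * V ‖z‖
      ≤ ∫⁻ θ in Ioo (-Real.pi) Real.pi, ∫⁻ r in Ico (0:ℝ) 1,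
        G (circleMap 0 r θ) * V ‖circleMap 0 r θ‖ :=
        lintegral_ball_le_polar (hGm.mul (hVm.comp measurable_norm))
    _ = ∫⁻ θ in Ioo (-Real.pi) Real.pi, ∫⁻ r in Ico (0:ℝ) 1, G (circleMap 0 r θ) * V r := by
        refine lintegral_congr fun θ => setLIntegral_congr_fun measurableSet_Ico fun r hr => ?_
        simp [abs_of_nonneg hr.1]
    _ ≤ ∫⁻ θ in Ioo (-Real.pi) Real.pi, c1 * (cB * A * v0 + ch *
        ∫⁻ r in Ico r0 1, whitneyAvg η U (circleMap 0 r θ) * V r) := lintegral_mono hslice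
    _ = c1 * (cB * A * v0 * ENNReal.ofReal (2 * Real.pi) + ch *
        ∫⁻ θ in Ioo (-Real.pi) Real.pi,
          ∫⁻ r in Ico r0 1, whitneyAvg η U (circleMap 0 r θ) * V r) := by
        rw [lintegral_const_mul' c1 _ ENNReal.ofReal_ne_top, lintegral_add_left measurable_const,
          lintegral_const_mul' ch _ hcht, setLIntegral_const, Real.volume_Ioo,
          show Real.pi - -Real.pi = 2 * Real.pi by ring]
    _ ≤ c1 * (cB * ((V 0)⁻¹ * ENNReal.ofReal K * Y) * v0 * ENNReal.ofReal (2 * Real.pi) + ch *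
        (ENNReal.ofReal r0⁻¹ * (c4 * Y))) := by gcongr
    _ = _ := by ring

/-! ### Regular weights -/

section weight
variable {ω : ℝ → ℝ}

theorem RadialWeight.intervalIntegrable (hω : RadialWeight ω) {a b : ℝ} (ha : a ∈ Icc (0:ℝ) 1)
    (hb : b ∈ Icc (0:ℝ) 1) : IntervalIntegrable ω volume a b := by
  have h : IntervalIntegrable ω volume 0 1 :=
    (intervalIntegrable_iff_integrableOn_Ico_of_le zero_le_one).2 hω.2.1
  refine h.mono_set ?_
  rw [uIcc_of_le zero_le_one]
  exact uIcc_subset_Icc ha hb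

theorem RadialWeight.tail_sub (hω : RadialWeight ω) {a b : ℝ} (ha : a ∈ Icc (0:ℝ) 1)
    (hb : b ∈ Icc (0:ℝ) 1) : tailInt ω a - tailInt ω b = ∫ s in a..b, ω s := by
  have h1 : (1:ℝ) ∈ Icc (0:ℝ) 1 := by simp
  have := intervalIntegral.integral_add_adjacent_intervals (hω.intervalIntegrable ha hb)
    (hω.intervalIntegrable hb h1)
  simp only [tailInt]
  linarith

theorem RadialWeight.tail_anti (hω : RadialWeight ω) {a b : ℝ} (ha : 0 ≤ a) (hab : a ≤ b)
    (hb : b < 1) : tailInt ω b ≤ tailInt ω a := by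
  have h := hω.tail_sub (a := a) (b := b) ⟨ha, by linarith⟩ ⟨by linarith, hb.le⟩
  have : 0 ≤ ∫ s in a..b, ω s :=
    intervalIntegral.integral_nonneg hab fun s hs => hω.1 s ⟨by linarith [hs.1], by linarith [hs.2]⟩
  linarith

theorem RadialWeight.tail_sub_le (hω : RadialWeight ω) {c : ℝ} (hc : 1 ≤ c)
    (h : ∀ r ∈ Ico (0:ℝ) 1, ω r ≤ c * assocW ω r) {r t : ℝ} (hr : 0 ≤ r) (hrt : r ≤ t)
    (ht : t < 1) : tailInt ω r - tailInt ω t ≤ (t - r) * (c * (tailInt ω r / (1 - t))) := by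
  rw [hω.tail_sub ⟨hr, by linarith⟩ ⟨by linarith, ht.le⟩]
  calc ∫ s in r..t, ω s ≤ ∫ s in r..t, c * (tailInt ω r / (1 - t)) := by
        refine intervalIntegral.integral_mono_on hrt
          (hω.intervalIntegrable ⟨hr, by linarith⟩ ⟨by linarith, ht.le⟩) (by simp) fun s hs => ?_
        have hs1 : s < 1 := by linarith [hs.2]
        refine (h s ⟨by linarith [hs.1], hs1⟩).trans ?_
        unfold assocW
        have h0 := hω.tail_anti hr hs.1 hs1
        have h1 := hω.2.2 r ⟨hr, by linarith⟩
        have h2 : 0 < 1 - t := by linarith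
        have h3 : 1 - t ≤ 1 - s := by linarith [hs.2]
        gcongr
    _ = _ := by rw [intervalIntegral.integral_const, smul_eq_mul]

theorem RadialWeight.le_tail_sub (hω : RadialWeight ω) {c : ℝ} (hc : 1 ≤ c)
    (h : ∀ r ∈ Ico (0:ℝ) 1, c⁻¹ * assocW ω r ≤ ω r) {r t : ℝ} (hr : 0 ≤ r) (hrt : r ≤ t)
    (ht : t < 1) : (t - r) * (c⁻¹ * (tailInt ω t / (1 - r))) ≤ tailInt ω r - tailInt ω t := by
  rw [hω.tail_sub ⟨hr, by linarith⟩ ⟨by linarith, ht.le⟩]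
  calc (t - r) * (c⁻¹ * (tailInt ω t / (1 - r))) = ∫ s in r..t, c⁻¹ * (tailInt ω t / (1 - r)) := by
        rw [intervalIntegral.integral_const, smul_eq_mul]
    _ ≤ _ := by
        refine intervalIntegral.integral_mono_on hrt (by simp)
          (hω.intervalIntegrable ⟨hr, by linarith⟩ ⟨by linarith, ht.le⟩) fun s hs => ?_
        have hs1 : s < 1 := by linarith [hs.2]
        refine le_trans ?_ (h s ⟨by linarith [hs.1], hs1⟩)
        unfold assocW
        have h0 := hω.tail_anti (by linarith [hs.1]) hs.2 ht
        have h1 := hω.2.2 t ⟨by linarith, by linarith⟩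
        have h2 : 0 < 1 - s := by linarith
        have h3 : 1 - s ≤ 1 - r := by linarith [hs.1]
        have h4 : 0 ≤ tailInt ω s := by linarith
        gcongr

theorem RadialWeight.assocW_nonneg (hω : RadialWeight ω) {r : ℝ} (hr : r ∈ Ico (0:ℝ) 1) :
    0 ≤ assocW ω r :=
  div_nonneg (hω.2.2 r hr).le (by linarith [hr.2])

/-- The weight `ω̂(r) / (1 - r)` is almost constant on Whitney discs of parameter `1 / (4c)`: an inward
step only increases the tail integral, and an outward one lowers it by at most a third. -/
theorem RadialWeight.assocW_loc (hω : RadialWeight ω) {c : ℝ} (hc : 1 ≤ c)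
    (h : ∀ r ∈ Ico (0:ℝ) 1, ω r ≤ c * assocW ω r) {r t : ℝ} (hr : r ∈ Ico (0:ℝ) 1)
    (ht : t ∈ Ico (0:ℝ) 1) (hrt : |r - t| ≤ (4 * c)⁻¹ * (1 - r)) :
    assocW ω r ≤ 2 * assocW ω t := by
  have hcp : 0 < c := by linarith
  obtain ⟨hl, hu⟩ := abs_le.1 hrt
  have hη : (4 * c)⁻¹ ≤ 1 / 4 := by
    rw [inv_le_comm₀ (by positivity) (by norm_num)]; linarith
  have hr1 : 0 < 1 - r := by linarith [hr.2]
  have ht1 : 0 < 1 - t := by linarith [ht.2]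
  have hηr : (4 * c)⁻¹ * (1 - r) ≤ 1 / 4 * (1 - r) := by gcongr
  have hΦr := hω.2.2 r hr
  have hΦt := hω.2.2 t ht
  unfold assocW
  rw [← mul_div_assoc, div_le_div_iff₀ hr1 ht1]
  rcases le_total t r with htr | htr
  · have h0 := hω.tail_anti ht.1 htr hr.2
    have : 1 - t ≤ 2 * (1 - r) := by linarith
    calc tailInt ω r * (1 - t) ≤ tailInt ω t * (2 * (1 - r)) := by gcongr
      _ = _ := by ring
  · have h0 := hω.tail_sub_le hc h hr.1 htr ht.2
    have h1 : t - r ≤ (3 * c)⁻¹ * (1 - t) := by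
      have e : (4 * c)⁻¹ * (1 - r) = (1 - r) / (4 * c) := by ring
      have e2 : (3 * c)⁻¹ * (1 - t) = (1 - t) / (3 * c) := by ring
      rw [e] at hl
      rw [e2, le_div_iff₀ (by positivity)]
      have h3 : t - r ≤ (1 - r) / (4 * c) := by linarith
      rw [le_div_iff₀ (by positivity)] at h3
      nlinarith
    have h2 : tailInt ω r - tailInt ω t ≤ tailInt ω r / 3 := by
      calc _ ≤ _ := h0
        _ ≤ ((3 * c)⁻¹ * (1 - t)) * (c * (tailInt ω r / (1 - t))) := by gcongr
        _ = _ := by field_simp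
    nlinarith

/-- Moving from `s` to `t = (s + κ) / (1 + κ)` shrinks the distance to `1` by `1 + κ`, while the lower
regularity bound makes the tail integral drop by a fixed factor. -/
theorem RadialWeight.assocW_contr (hω : RadialWeight ω) {c κ : ℝ} (hc : 1 ≤ c) (hκ : 0 < κ)
    (h : ∀ r ∈ Ico (0:ℝ) 1, c⁻¹ * assocW ω r ≤ ω r) {s : ℝ} (hs : s ∈ Ico (0:ℝ) 1) :
    (s + κ) / (1 + κ) ∈ Ico (0:ℝ) 1 ∧
    assocW ω ((s + κ) / (1 + κ)) ≤ ((1 + κ) * (1 + κ / (c * (1 + κ)))⁻¹) * assocW ω s := by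
  have hcp : 0 < c := by linarith
  have hs1 : 0 < 1 - s := by linarith [hs.2]
  have hs0 := hs.1
  set t := (s + κ) / (1 + κ) with ht
  have e1 : 1 - t = (1 - s) / (1 + κ) := by rw [ht]; field_simp; ring
  have e2 : t - s = (1 - s) * κ / (1 + κ) := by rw [ht]; field_simp; ring
  have ht1 : 0 < 1 - t := by rw [e1]; positivity
  have hst : 0 < t - s := by rw [e2]; positivity
  refine ⟨⟨by linarith, by linarith⟩, ?_⟩
  have h0 := hω.le_tail_sub hc h hs.1 (by linarith : s ≤ t) (by linarith)
  have h1 : (t - s) * (c⁻¹ * (tailInt ω t / (1 - s))) = tailInt ω t * (κ / (c * (1 + κ))) := by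
    rw [e2]; field_simp
  rw [h1] at h0
  have h2 : tailInt ω t ≤ tailInt ω s / (1 + κ / (c * (1 + κ))) := by
    rw [le_div_iff₀ (by positivity)]; linarith
  unfold assocW
  rw [e1]
  calc tailInt ω t / ((1 - s) / (1 + κ)) ≤
        (tailInt ω s / (1 + κ / (c * (1 + κ)))) / ((1 - s) / (1 + κ)) := by gcongr
    _ = _ := by field_simp

theorem RadialWeight.measurable_assocW (hω : RadialWeight ω) :
    Measurable ((Ico (0:ℝ) 1).indicator (assocW ω)) := by
  have hc : ContinuousOn (tailInt ω) (Icc 0 1) := by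
    have h := intervalIntegral.continuousOn_primitive_interval_left
      (f := ω) (a := 0) (b := 1) (μ := volume) (by
        rw [uIcc_of_le zero_le_one, integrableOn_Icc_iff_integrableOn_Ico]; exact hω.2.1)
    rw [uIcc_of_le zero_le_one] at h
    exact h
  have hc2 : ContinuousOn (assocW ω) (Ico 0 1) :=
    (hc.mono Ico_subset_Icc_self).div (by fun_prop) fun r hr => by linarith [hr.2]
  rw [← piecewise_eq_indicator]
  exact hc2.measurable_piecewise continuousOn_const measurableSet_Ico

/-- `ω` is only a.e. measurable on `[0, 1)`; polar coordinates show that the modulus pulls null sets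
back to null sets. -/
theorem RadialWeight.aemeasurable_norm (hω : RadialWeight ω) :
    AEMeasurable (fun z : ℂ => ω ‖z‖) (volume.restrict (Metric.ball (0:ℂ) 1)) := by
  have hac : Measure.map (fun z : ℂ => ‖z‖) (volume.restrict (Metric.ball (0:ℂ) 1)) ≪
      volume.restrict (Ico (0:ℝ) 1) := by
    refine Measure.AbsolutelyContinuous.mk fun s hs h0 => ?_
    rw [Measure.map_apply measurable_norm hs, ← lintegral_indicator_one (measurable_norm hs)]
    refine le_antisymm ((lintegral_ball_le_polar
      (measurable_one.indicator (measurable_norm hs))).trans ?_) zero_le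
    refine (lintegral_mono (g := fun _ => 0) fun θ => ?_).trans (by simp)
    calc ∫⁻ r in Ico (0:ℝ) 1, ((fun z : ℂ => ‖z‖) ⁻¹' s).indicator 1 (circleMap 0 r θ)
        = ∫⁻ r in Ico (0:ℝ) 1, s.indicator 1 r := by
          refine setLIntegral_congr_fun measurableSet_Ico fun r hr => ?_
          have hmem : circleMap 0 r θ ∈ (fun z : ℂ => ‖z‖) ⁻¹' s ↔ r ∈ s := by
            rw [mem_preimage, norm_circleMap_zero, abs_of_nonneg hr.1]
          by_cases hrs : r ∈ s
          · rw [indicator_of_mem (hmem.2 hrs), indicator_of_mem hrs]; rfl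
          · rw [indicator_of_notMem (mt hmem.1 hrs), indicator_of_notMem hrs]
      _ ≤ 0 := by rw [lintegral_indicator_one hs, h0]
  exact (hω.2.1.aestronglyMeasurable.aemeasurable.mono_ac hac).comp_measurable measurable_norm

end weight

/-! ### The norm equivalence -/

/-- For `0 < p < ∞` and a regular radial weight `ω` (i.e. `ω(r) ≍ ω̂(r)/(1-r)`
on `[0,1)`), there is `C ≥ 1` with `C⁻¹‖f‖_{A^p_ω} ≤ ‖Re f‖_{L^p_ω} ≤ C‖f‖_{A^p_ω}` for
every analytic `f` on `𝔻` with `Im f(0) = 0` (norms stated via their `p`-th powers). -/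
theorem statement9 (p : ℝ) (hp : 0 < p) (ω : ℝ → ℝ) (hω : RadialWeight ω)
    (hreg : ∃ c : ℝ, 1 ≤ c ∧ ∀ r ∈ Set.Ico (0:ℝ) 1,
      c⁻¹ * assocW ω r ≤ ω r ∧ ω r ≤ c * assocW ω r) :
    ∃ C : ℝ, 1 ≤ C ∧ ∀ f : ℂ → ℂ, DifferentiableOn ℂ f (Metric.ball (0:ℂ) 1) →
      (f 0).im = 0 →
      C⁻¹ * ApNorm p ω f ≤ LpReNorm p ω f ∧ LpReNorm p ω f ≤ C * ApNorm p ω f := by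
  obtain ⟨c, hc, hcω⟩ := hreg
  have hcp : 0 < c := by linarith
  have hlow : ∀ r ∈ Ico (0:ℝ) 1, c⁻¹ * assocW ω r ≤ ω r := fun r hr => (hcω r hr).1
  have hup : ∀ r ∈ Ico (0:ℝ) 1, ω r ≤ c * assocW ω r := fun r hr => (hcω r hr).2
  set η : ℝ := (4 * c)⁻¹ with hη
  have hηp : 0 < η := by positivity
  have hη2 : η ≤ 1 / 2 := by
    rw [hη, inv_le_comm₀ (by positivity) (by norm_num)]; linarith
  set V : ℝ → ENNReal := fun r => ENNReal.ofReal ((Ico (0:ℝ) 1).indicator (assocW ω) r) with hV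
  have hVin : ∀ r ∈ Ico (0:ℝ) 1, V r = ENNReal.ofReal (assocW ω r) := fun r hr => by
    simp only [hV, indicator_of_mem hr]
  have h00 : (0:ℝ) ∈ Ico (0:ℝ) 1 := by simp
  obtain ⟨C, hCt, hC⟩ := analytic_le_re p hp (η := η) (K := 2) (V := V)
    (q := (1 + η / 2 / (c * (1 + η / 2)))⁻¹) hηp hη2 two_pos (by positivity)
    (inv_lt_one_of_one_lt₀ (by rw [lt_add_iff_pos_right]; positivity))
    hω.measurable_assocW.ennreal_ofReal
    (by
      rw [hVin 0 h00]
      have := hω.2.2 0 h00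
      simpa [assocW] using this)
    (fun R hR => by
      refine ⟨tailInt ω 0 / (1 - R), fun r hr => ?_⟩
      have hr1 : r < 1 := hr.2.trans hR
      rw [hVin r ⟨hr.1, hr1⟩]
      apply ENNReal.ofReal_le_ofReal
      unfold assocW
      have h1 := hω.tail_anti le_rfl hr.1 hr1
      have h2 := hω.2.2 0 h00
      have h3 : 0 < 1 - R := by linarith
      have h4 : 1 - R ≤ 1 - r := by linarith [hr.2]
      gcongr)
    (fun r hr t ht hrt => by
      rw [hVin r hr, hVin t ht, ← ENNReal.ofReal_mul (by norm_num)]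
      exact ENNReal.ofReal_le_ofReal (hω.assocW_loc hc hup hr ht hrt))
    (fun s hs => by
      obtain ⟨h1, h2⟩ := hω.assocW_contr (κ := η / 2) hc (by positivity) hlow hs
      rw [hVin s hs, hVin _ h1, ← ENNReal.ofReal_mul (by positivity)]
      exact ENNReal.ofReal_le_ofReal h2)
  set C' : ENNReal := ENNReal.ofReal c * (C * ENNReal.ofReal c) with hC'
  have hC't : C' ≠ ⊤ := by rw [hC']; finiteness
  refine ⟨max 1 C'.toReal, le_max_left _ _, fun f hf hf0 => ?_⟩
  set D := Metric.ball (0:ℂ) 1 with hD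
  have hDm : MeasurableSet D := Metric.isOpen_ball.measurableSet
  have hnorm : ∀ z ∈ D, ‖z‖ ∈ Ico (0:ℝ) 1 := fun z hz =>
    ⟨norm_nonneg _, mem_ball_zero_iff.1 hz⟩
  -- `f` is arbitrary off the disc; cutting it off there makes it measurable
  set F : ℂ → ℂ := D.indicator f with hF
  have hFf : ∀ z ∈ D, F z = f z := fun z hz => indicator_of_mem hz f
  have hFm : Measurable F := by
    classical
    rw [hF, ← piecewise_eq_indicator]
    exact hf.continuousOn.measurable_piecewise continuousOn_const hDm
  have hfm : AEMeasurable f (volume.restrict D) :=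
    hFm.aemeasurable.congr (by
      filter_upwards [ae_restrict_mem hDm] with z hz using hFf z hz)
  have hmain := hC F hFm (hf.congr hFf) (by rw [hFf 0 (by simp [hD])]; exact hf0)
  set X := ∫⁻ z in D, ENNReal.ofReal (‖f z‖ ^ p * ω ‖z‖) with hX
  set Y := ∫⁻ z in D, ENNReal.ofReal (|(f z).re| ^ p * ω ‖z‖) with hY
  have hYX : Y ≤ X := by
    refine setLIntegral_mono' hDm fun z hz => ENNReal.ofReal_le_ofReal ?_
    have := hω.1 _ (hnorm z hz)
    have := Complex.abs_re_le_norm (f z)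
    gcongr
  have hXY : X ≤ C' * Y := by
    calc X ≤ ENNReal.ofReal c * ∫⁻ z in D, ENNReal.ofReal (‖F z‖ ^ p) * V ‖z‖ := by
          rw [← lintegral_const_mul' _ _ ENNReal.ofReal_ne_top]
          refine setLIntegral_mono' hDm fun z hz => ?_
          rw [hFf z hz, hVin _ (hnorm z hz), ← ENNReal.ofReal_mul (by positivity),
            ← ENNReal.ofReal_mul (by positivity)]
          apply ENNReal.ofReal_le_ofReal
          rw [mul_left_comm]
          have := hup _ (hnorm z hz)
          gcongr
      _ ≤ ENNReal.ofReal c * (C * ∫⁻ z in D, ENNReal.ofReal (|(F z).re| ^ p) * V ‖z‖) := by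
          gcongr
      _ ≤ ENNReal.ofReal c * (C * (ENNReal.ofReal c * Y)) := by
          gcongr
          rw [← lintegral_const_mul' _ _ ENNReal.ofReal_ne_top]
          refine setLIntegral_mono' hDm fun z hz => ?_
          rw [hFf z hz, hVin _ (hnorm z hz), ← ENNReal.ofReal_mul (by positivity),
            ← ENNReal.ofReal_mul (by positivity)]
          apply ENNReal.ofReal_le_ofReal
          rw [mul_left_comm]
          have h1 := hlow _ (hnorm z hz)
          rw [inv_mul_le_iff₀ hcp] at h1
          gcongr
      _ = C' * Y := by rw [hC']; ring
  have hωm := hω.aemeasurable_norm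
  have hA : ApNorm p ω f = Real.pi⁻¹ * X.toReal := by
    rw [ApNorm, integral_eq_lintegral_of_nonneg_ae]
    · filter_upwards [ae_restrict_mem hDm] with z hz
      have := hω.1 _ (hnorm z hz)
      simp only [Pi.zero_apply]; positivity
    · exact ((hfm.norm.pow_const p).mul hωm).aestronglyMeasurable
  have hL : LpReNorm p ω f = Real.pi⁻¹ * Y.toReal := by
    rw [LpReNorm, integral_eq_lintegral_of_nonneg_ae]
    · filter_upwards [ae_restrict_mem hDm] with z hz
      have := hω.1 _ (hnorm z hz)
      simp only [Pi.zero_apply]; positivity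
    · exact ((((Complex.measurable_re.comp_aemeasurable hfm).abs).pow_const p).mul
        hωm).aestronglyMeasurable
  have hM1 : (1:ℝ) ≤ max 1 C'.toReal := le_max_left _ _
  have hMC : C'.toReal ≤ max 1 C'.toReal := le_max_right _ _
  have hpi := Real.pi_pos
  rw [hA, hL, inv_mul_le_iff₀ (by linarith)]
  by_cases hYt : Y = ⊤
  · -- both integrals diverge, so both Bochner integrals take the junk value `0`
    have hXt : X = ⊤ := top_le_iff.1 (hYt ▸ hYX)
    simp [hYt, hXt]
  · have hXt : X ≠ ⊤ := ne_top_of_le_ne_top (ENNReal.mul_ne_top hC't hYt) hXY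
    have h1 : Y.toReal ≤ X.toReal := ENNReal.toReal_mono hXt hYX
    have h2 : X.toReal ≤ C'.toReal * Y.toReal := by
      rw [← ENNReal.toReal_mul]
      exact ENNReal.toReal_mono (ENNReal.mul_ne_top hC't hYt) hXY
    have h3 : 0 ≤ Y.toReal := ENNReal.toReal_nonneg
    have h4 : 0 ≤ X.toReal := ENNReal.toReal_nonneg
    constructor
    · rw [mul_left_comm]
      gcongr
      exact h2.trans (by gcongr)
    · rw [mul_left_comm]
      gcongr
      nlinarith
end

section
/- Let φ : [0,1] → [0,∞) be a decreasing function with lim_{r→1^-} φ(r) = 0 and φ(r) > 0 for 0 ≤ r < 1. Then there exists a radial weight ω = ω_φ such that ω̃ ∉ D̂, yet for every 0 < p < ∞ one has the inclusions A^p ⊂ A^p_ω ⊂ A^p_φ; that is, for every analytic f on 𝔻: if ∫_𝔻 |f|^p dA < ∞ then ∫_𝔻 |f|^p ω dA < ∞, and if ∫_𝔻 |f|^p ω dA < ∞ then ∫_𝔻 |f|^p φ(|z|) dA < ∞. -/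
/-!
The weight `ω` is a pointwise modification of `φ` with `φ ≤ ω ≤ φ 0` on `[0,1)`, so both inclusions
hold by comparison of integrands and analyticity of `f` plays no role beyond measurability. Put
`δ n = 2^{-n²}`. On the gap set `S`, consisting of the `x` with `2 δ (n+1) < 1 - x ≤ δ n` for some
`n`, let `ω = φ`; on the complementary short layers `δ n < 1 - x ≤ 2 δ n` let `ω = φ 0`.

With `M = φ 0`, the tail of `ω̃` at `1 - 2 δ n` is at least `M δ n / 8`, because of the layer
`δ n < 1 - x ≤ 2 δ n`. The midpoint of `1 - 2 δ n` and `1` is `1 - δ n`, beyond which `ω` is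
at most `φ (1 - δ n) → 0` except on a piece of length `2 δ (n+1) = 4^{-n} δ n`. Hence `ω̃` is small
on most of `[1 - δ n, 1)`, its tail at `1 - δ n` is `o(δ n)`, and no doubling constant can exist.
-/

open MeasureTheory Set

/-- The scale `2^{-n²}` of the `n`-th layer. -/
noncomputable def layerScale (n : ℕ) : ℝ := (1 / 2 : ℝ) ^ (n ^ 2)

lemma layerScale_pos (n : ℕ) : 0 < layerScale n := by unfold layerScale; positivity

lemma layerScale_anti {m n : ℕ} (h : m ≤ n) : layerScale n ≤ layerScale m := by
  unfold layerScale
  exact pow_le_pow_of_le_one (by norm_num) (by norm_num) (Nat.pow_le_pow_left h 2)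

lemma layerScale_succ (n : ℕ) :
    2 * layerScale (n + 1) = (1 / 4 : ℝ) ^ n * layerScale n := by
  unfold layerScale
  have : (n + 1) ^ 2 = n ^ 2 + 2 * n + 1 := by ring
  rw [this, pow_add, pow_add, pow_mul]
  norm_num
  ring

lemma layerScale_tendsto : Filter.Tendsto layerScale Filter.atTop (nhds 0) := by
  have h := tendsto_pow_atTop_nhds_zero_of_lt_one (r := (1 / 2 : ℝ)) (by norm_num) (by norm_num)
  exact h.comp (Filter.tendsto_pow_atTop (by norm_num : (2 : ℕ) ≠ 0))

/-- The gap set: points whose distance to `1` lies in some `(2 δ (n+1), δ n]`. -/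
def gapSet : Set ℝ := {x | ∃ n : ℕ, 2 * layerScale (n + 1) < 1 - x ∧ 1 - x ≤ layerScale n}

lemma measurableSet_gapSet : MeasurableSet gapSet := by
  have : gapSet = ⋃ n : ℕ, Set.Ico (1 - layerScale n) (1 - 2 * layerScale (n + 1)) := by
    ext x
    simp only [gapSet, Set.mem_ofPred_eq, Set.mem_iUnion, Set.mem_Ico]
    refine exists_congr fun n => ⟨fun h => ⟨?_, ?_⟩, fun h => ⟨?_, ?_⟩⟩ <;> linarith [h.1, h.2]
  rw [this]
  exact MeasurableSet.iUnion fun n => measurableSet_Ico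

lemma not_mem_gapSet {n : ℕ} {x : ℝ} (h1 : layerScale n < 1 - x) (h2 : 1 - x ≤ 2 * layerScale n) :
    x ∉ gapSet := by
  rintro ⟨m, hm1, hm2⟩
  rcases le_or_gt n m with h | h
  · linarith [layerScale_anti h]
  · linarith [layerScale_anti (show m + 1 ≤ n from h)]

open Classical in
/-- The weight equal to `g` on the gap set and to the constant `M` on the layers. -/
noncomputable def layeredWeight (g : ℝ → ℝ) (M : ℝ) : ℝ → ℝ :=
  gapSet.piecewise g (fun _ => M)

lemma layeredWeight_mem (g : ℝ → ℝ) (M : ℝ) {x : ℝ} (hx : x ∈ gapSet) :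
    layeredWeight g M x = g x := by classical exact Set.piecewise_eq_of_mem _ _ _ hx

lemma layeredWeight_not_mem (g : ℝ → ℝ) (M : ℝ) {x : ℝ} (hx : x ∉ gapSet) :
    layeredWeight g M x = M := by classical exact Set.piecewise_eq_of_notMem _ _ _ hx

lemma measurable_layeredWeight {g : ℝ → ℝ} (hg : Measurable g) (M : ℝ) :
    Measurable (layeredWeight g M) := by
  classical exact Measurable.piecewise measurableSet_gapSet hg measurable_const

lemma tail_le_of_two_bounds {h : ℝ → ℝ} {r s a b : ℝ} (hrs : r ≤ s) (hs : s ≤ 1)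
    (hi : IntervalIntegrable h volume r 1)
    (ha : ∀ x ∈ Set.Ioo r s, h x ≤ a) (hb : ∀ x ∈ Set.Ioo s 1, h x ≤ b) :
    ∫ x in r..1, h x ≤ a * (s - r) + b * (1 - s) := by
  have i1 : IntervalIntegrable h volume r s :=
    hi.mono_set (by rw [uIcc_of_le hrs, uIcc_of_le (hrs.trans hs)]; exact Icc_subset_Icc_right hs)
  have i2 : IntervalIntegrable h volume s 1 :=
    hi.mono_set (by rw [uIcc_of_le hs, uIcc_of_le (hrs.trans hs)]; exact Icc_subset_Icc_left hrs)
  rw [← intervalIntegral.integral_add_adjacent_intervals i1 i2]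
  have e1 := intervalIntegral.integral_mono_on_of_le_Ioo hrs i1 intervalIntegrable_const ha
  have e2 := intervalIntegral.integral_mono_on_of_le_Ioo hs i2 intervalIntegrable_const hb
  simp only [intervalIntegral.integral_const, smul_eq_mul] at e1 e2
  linarith

lemma le_tail_of_bound {h : ℝ → ℝ} {r s a : ℝ} (hrs : r ≤ s) (hs : s ≤ 1)
    (hi : IntervalIntegrable h volume r 1)
    (ha : ∀ x ∈ Set.Ioo r s, a ≤ h x) (hb : ∀ x ∈ Set.Ioo s 1, 0 ≤ h x) :
    a * (s - r) ≤ ∫ x in r..1, h x := by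
  have := tail_le_of_two_bounds (h := fun x => - h x) (a := -a) (b := 0) hrs hs hi.neg
    (fun x hx => neg_le_neg (ha x hx)) (fun x hx => by simpa using hb x hx)
  rw [intervalIntegral.integral_neg] at this
  linarith

/-- A nonnegative weight bounded by `M` on `[0,1)`, equal to `M` on infinitely many layers and
tending to `0` on the gaps between them, has an associated weight violating upper doubling. -/
lemma layered_not_doubling {ω : ℝ → ℝ} {M : ℝ} (hM : 0 < M)
    (hω : ∀ r, 0 ≤ r → r < 1 → IntervalIntegrable ω volume r 1)
    (h0 : ∀ x ∈ Set.Ico (0:ℝ) 1, 0 ≤ ω x) (hle : ∀ x ∈ Set.Ico (0:ℝ) 1, ω x ≤ M)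
    (hlayer : ∀ n x, layerScale n < 1 - x → 1 - x ≤ 2 * layerScale n → ω x = M)
    (hgap : ∀ ε > 0, ∀ᶠ n in Filter.atTop, ∀ x, 2 * layerScale (n + 1) < 1 - x →
      1 - x ≤ layerScale n → ω x ≤ ε) :
    ¬ (IntegrableOn (assocW ω) (Set.Ico 0 1) ∧ Dhat (assocW ω)) := by
  rintro ⟨hint, C, hC, hdbl⟩
  have hWint : ∀ r, 0 ≤ r → r < 1 → IntervalIntegrable (assocW ω) volume r 1 := by
    intro r hr0 hr1
    rw [intervalIntegrable_iff_integrableOn_Ico_of_le hr1.le]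
    exact hint.mono_set (Ico_subset_Ico_left hr0)
  -- any `η` with `24 C η < 1` works
  obtain ⟨η, hη0, hη1, hηC⟩ : ∃ η : ℝ, 0 < η ∧ η ≤ 1 ∧ 24 * C * η < 1 := by
    refine ⟨1 / (25 * C), by positivity, ?_, ?_⟩
    · rw [div_le_one (by positivity)]; linarith
    · have : 24 * C * (1 / (25 * C)) = 24 / 25 := by field_simp
      rw [this]; norm_num
  have hpow : ∀ᶠ n : ℕ in Filter.atTop, (1 / 4 : ℝ) ^ n ≤ η ^ 2 :=
    (tendsto_pow_atTop_nhds_zero_of_lt_one (r := (1 / 4 : ℝ)) (by norm_num)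
      (by norm_num)).eventually_le_const (by positivity)
  obtain ⟨n, hn1, hn2, hn3⟩ :=
    (hpow.and ((hgap (M * η) (by positivity)).and (Filter.eventually_ge_atTop 1))).exists
  set δ := layerScale n with hδ
  have hδ0 : 0 < δ := layerScale_pos n
  have hδ1 : 2 * δ ≤ 1 := by
    have := layerScale_anti hn3
    have h1 : layerScale 1 = 1 / 2 := by norm_num [layerScale]
    linarith
  have hnext : 2 * layerScale (n + 1) ≤ η ^ 2 * δ := by
    rw [layerScale_succ]; gcongr
  have hnext0 := layerScale_pos (n + 1)
  have hW0 : ∀ x ∈ Set.Ico (0:ℝ) 1, 0 ≤ assocW ω x := by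
    intro x hx
    have := le_tail_of_bound (a := 0) le_rfl hx.2.le (hω x hx.1 hx.2)
      (fun y hy => absurd (hy.1.trans hy.2) (lt_irrefl _))
      (fun y hy => h0 y ⟨hx.1.trans hy.1.le, hy.2⟩)
    exact div_nonneg (by unfold tailInt; linarith) (by linarith [hx.2])
  have hWM : ∀ x ∈ Set.Ico (0:ℝ) 1, assocW ω x ≤ M := by
    intro x hx
    have h1 : 0 < 1 - x := by linarith [hx.2]
    rw [assocW, div_le_iff₀ h1]
    have := tail_le_of_two_bounds (a := M) (b := M) le_rfl hx.2.le (hω x hx.1 hx.2)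
      (fun y hy => absurd (hy.1.trans hy.2) (lt_irrefl _))
      (fun y hy => hle y ⟨hx.1.trans hy.1.le, hy.2⟩)
    unfold tailInt; linarith
  have hlower : M * δ / 8 ≤ tailInt (assocW ω) (1 - 2 * δ) := by
    have := le_tail_of_bound (h := assocW ω) (r := 1 - 2 * δ) (s := 1 - 3 / 2 * δ) (a := M / 4)
      (by linarith) (by linarith) (hWint _ (by linarith) (by linarith)) ?_ ?_
    · unfold tailInt; linarith
    · rintro x ⟨hx1, hx2⟩
      have h1 : 0 < 1 - x := by linarith
      rw [assocW, le_div_iff₀ h1]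
      have := le_tail_of_bound (h := ω) (r := x) (s := 1 - δ) (a := M)
        (by linarith) (by linarith) (hω _ (by linarith) (by linarith))
        (fun y hy => (hlayer n y (by linarith [hy.2]) (by linarith [hy.1])).ge)
        (fun y hy => h0 y ⟨by linarith [hy.1], hy.2⟩)
      unfold tailInt
      nlinarith
    · exact fun x hx => hW0 x ⟨by linarith [hx.1], hx.2⟩
  have hupper : tailInt (assocW ω) (1 - δ) ≤ 3 * M * η * δ := by
    have := tail_le_of_two_bounds (h := assocW ω) (r := 1 - δ) (s := 1 - η * δ) (a := 2 * M * η)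
      (b := M) (by nlinarith) (by nlinarith) (hWint _ (by linarith) (by linarith)) ?_ ?_
    · have h2 : 0 ≤ M * η * (η * δ) := by positivity
      unfold tailInt; linarith
    · rintro x ⟨hx1, hx2⟩
      have h1 : 0 < 1 - x := by nlinarith
      have h3 : η ^ 2 * δ ≤ η * δ := by gcongr; nlinarith
      rw [assocW, div_le_iff₀ h1]
      have := tail_le_of_two_bounds (h := ω) (r := x) (s := 1 - 2 * layerScale (n + 1))
        (a := M * η) (b := M)
        (by linarith) (by linarith) (hω _ (by linarith) (by linarith))
        (fun y hy => hn2 y (by linarith [hy.2]) (by linarith [hy.1]))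
        (fun y hy => hle y ⟨by linarith [hy.1], hy.2⟩)
      have h4 : M * (2 * layerScale (n + 1)) ≤ M * η * (1 - x) := by
        calc M * (2 * layerScale (n + 1)) ≤ M * (η ^ 2 * δ) := by gcongr
          _ = M * η * (η * δ) := by ring
          _ ≤ M * η * (1 - x) := by gcongr; linarith
      have h5 : 0 ≤ M * η * layerScale (n + 1) := by positivity
      unfold tailInt
      linarith
    · exact fun x hx => hWM x ⟨by nlinarith [hx.1], hx.2⟩
  have hd := hdbl (1 - 2 * δ) ⟨by linarith, by linarith⟩
  rw [show (1 + (1 - 2 * δ)) / 2 = 1 - δ by ring] at hd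
  have h6 : C * tailInt (assocW ω) (1 - δ) ≤ C * (3 * M * η * δ) := by gcongr
  have h7 : 0 < M * δ := by positivity
  nlinarith

/-- Given a decreasing `φ : [0,1] → [0,∞)` with `φ → 0` at `1⁻` and `φ > 0` on
`[0,1)`, there is a radial weight `ω` with `ω̃ ∉ D̂` (i.e. it is not the case that `ω̃` is a
weight belonging to `D̂`), yet `A^p ⊂ A^p_ω ⊂ A^p_φ` for all `0 < p < ∞`. -/
theorem statement10 (φ : ℝ → ℝ) (hφ0 : ∀ r ∈ Set.Icc (0:ℝ) 1, 0 ≤ φ r)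
    (hdec : AntitoneOn φ (Set.Icc (0:ℝ) 1))
    (hlim : Filter.Tendsto φ (nhdsWithin 1 (Set.Iio (1:ℝ))) (nhds 0))
    (hpos : ∀ r ∈ Set.Ico (0:ℝ) 1, 0 < φ r) :
    ∃ ω : ℝ → ℝ, RadialWeight ω ∧
      ¬ (MeasureTheory.IntegrableOn (assocW ω) (Set.Ico 0 1) ∧ Dhat (assocW ω)) ∧
      ∀ p : ℝ, 0 < p → ∀ f : ℂ → ℂ, DifferentiableOn ℂ f (Metric.ball (0:ℂ) 1) →
        (MeasureTheory.IntegrableOn (fun z => ‖f z‖ ^ p) (Metric.ball (0:ℂ) 1) →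
          MeasureTheory.IntegrableOn (fun z => ‖f z‖ ^ p * ω ‖z‖) (Metric.ball (0:ℂ) 1)) ∧
        (MeasureTheory.IntegrableOn (fun z => ‖f z‖ ^ p * ω ‖z‖) (Metric.ball (0:ℂ) 1) →
          MeasureTheory.IntegrableOn (fun z => ‖f z‖ ^ p * φ ‖z‖) (Metric.ball (0:ℂ) 1)) := by
  -- `g` extends `φ` from `[0,1]` to a globally antitone, hence measurable, function
  obtain ⟨g, hganti, hgφ⟩ : ∃ g : ℝ → ℝ, Antitone g ∧ EqOn φ g (Set.Icc 0 1) := by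
    refine hdec.exists_antitone_extension ⟨φ 1, ?_⟩ ⟨φ 0, ?_⟩
    · rintro _ ⟨x, hx, rfl⟩
      exact hdec hx ⟨zero_le_one, le_rfl⟩ hx.2
    · rintro _ ⟨x, hx, rfl⟩
      exact hdec ⟨le_rfl, zero_le_one⟩ hx hx.1
  have hgm : Measurable g := hganti.measurable
  have hM : 0 < φ 0 := hpos 0 ⟨le_rfl, one_pos⟩
  set ω := layeredWeight g (φ 0) with hωdef
  have hωm : Measurable ω := measurable_layeredWeight hgm _
  have hφM : ∀ x ∈ Set.Ico (0:ℝ) 1, φ x ≤ φ 0 := fun x hx =>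
    hdec ⟨le_rfl, zero_le_one⟩ ⟨hx.1, hx.2.le⟩ hx.1
  have hωφ : ∀ x ∈ Set.Ico (0:ℝ) 1, φ x ≤ ω x := by
    intro x hx
    by_cases h : x ∈ gapSet
    · rw [hωdef, layeredWeight_mem _ _ h, hgφ ⟨hx.1, hx.2.le⟩]
    · rw [hωdef, layeredWeight_not_mem _ _ h]; exact hφM x hx
  have hωM : ∀ x ∈ Set.Ico (0:ℝ) 1, ω x ≤ φ 0 := by
    intro x hx
    by_cases h : x ∈ gapSet
    · rw [hωdef, layeredWeight_mem _ _ h, ← hgφ ⟨hx.1, hx.2.le⟩]; exact hφM x hx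
    · rw [hωdef, layeredWeight_not_mem _ _ h]
  have hω0 : ∀ x ∈ Set.Ico (0:ℝ) 1, 0 < ω x := fun x hx => (hpos x hx).trans_le (hωφ x hx)
  have hωint : IntegrableOn ω (Set.Ico 0 1) := by
    refine Measure.integrableOn_of_bounded (M := φ 0) (by simp) hωm.aestronglyMeasurable ?_
    filter_upwards [ae_restrict_mem measurableSet_Ico] with x hx
    rw [Real.norm_of_nonneg (hω0 x hx).le]
    exact hωM x hx
  have hωii : ∀ r, 0 ≤ r → r < 1 → IntervalIntegrable ω volume r 1 := by
    intro r hr0 hr1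
    rw [intervalIntegrable_iff_integrableOn_Ico_of_le hr1.le]
    exact hωint.mono_set (Ico_subset_Ico_left hr0)
  refine ⟨ω, ⟨fun r hr => (hω0 r hr).le, hωint, fun r hr => ?_⟩, ?_, ?_⟩
  · exact intervalIntegral.intervalIntegral_pos_of_pos_on (hωii r hr.1 hr.2)
      (fun x hx => hω0 x ⟨hr.1.trans hx.1.le, hx.2⟩) hr.2
  · refine layered_not_doubling hM hωii (fun x hx => (hω0 x hx).le) hωM
      (fun n x h1 h2 => layeredWeight_not_mem _ _ (not_mem_gapSet h1 h2)) fun ε hε => ?_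
    have ht : Filter.Tendsto (fun n => 1 - layerScale n) Filter.atTop
        (nhdsWithin 1 (Set.Iio (1:ℝ))) := by
      refine tendsto_nhdsWithin_iff.2 ⟨?_, Filter.Eventually.of_forall fun n => ?_⟩
      · simpa using layerScale_tendsto.const_sub 1
      · simpa using layerScale_pos n
    filter_upwards [(hlim.comp ht).eventually_le_const hε] with n hn x hx1 hx2
    have hn1 : layerScale n ≤ 1 := by simpa [layerScale] using layerScale_anti (Nat.zero_le n)
    rw [hωdef, layeredWeight_mem _ _ ⟨n, hx1, hx2⟩]
    refine (hganti (show 1 - layerScale n ≤ x by linarith)).trans ?_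
    rw [← hgφ ⟨by linarith, by linarith [layerScale_pos n]⟩]
    exact hn
  · intro p hp f hf
    have hball : ∀ z ∈ Metric.ball (0:ℂ) 1, ‖z‖ ∈ Set.Ico (0:ℝ) 1 := fun z hz =>
      ⟨norm_nonneg z, by simpa using hz⟩
    have hfm : AEStronglyMeasurable (fun z => ‖f z‖ ^ p)
        (volume.restrict (Metric.ball (0:ℂ) 1)) :=
      (hf.continuousOn.norm.rpow_const fun _ _ => Or.inr hp.le).aestronglyMeasurable
        measurableSet_ball
    have hmem := ae_restrict_mem (μ := volume) (measurableSet_ball (x := (0:ℂ)) (ε := 1))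
    constructor
    · intro h
      refine Integrable.mono' (h.mul_const (φ 0))
        (hfm.mul (hωm.comp measurable_norm).aestronglyMeasurable) ?_
      filter_upwards [hmem] with z hz
      have hz' := hball z hz
      have := hω0 _ hz'
      rw [Real.norm_of_nonneg (by positivity)]
      gcongr
      exact hωM _ hz'
    · intro h
      have hφm : AEStronglyMeasurable (fun z : ℂ => φ ‖z‖)
          (volume.restrict (Metric.ball (0:ℂ) 1)) := by
        refine (hgm.comp measurable_norm).aestronglyMeasurable.congr ?_
        filter_upwards [hmem] with z hz
        exact (hgφ ⟨(hball z hz).1, (hball z hz).2.le⟩).symm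
      refine Integrable.mono' h (hfm.mul hφm) ?_
      filter_upwards [hmem] with z hz
      have hz' := hball z hz
      have := hpos _ hz'
      rw [Real.norm_of_nonneg (by positivity)]
      gcongr
      exact hωφ _ hz'
end

section
/- For each β > 0 there exists a radial weight ω ∈ D̂ such that the weight ω_{[β]}, defined by ω_{[β]}(r) = ω(r)(1−r)^β for 0 ≤ r < 1, does not belong to D̂. In other words, the class D̂ is not closed under multiplication by (1−r)^β for any β > 0. -/
/-!
In the variable `u = 1 - log (1 - r)` the tail of `r ↦ (1 - r)⁻¹ g(u(r))` is `∫_u^∞ g`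
(`tailInt_logLift`), the map `r ↦ (1 + r) / 2` is the translation `u ↦ u + log 2`, and
multiplication by `(1 - r)^β` multiplies `g` by `exp (β (1 - u))`.

Take `g = u⁻²` on the union of the blocks `[4ⁿ, 2·4ⁿ]` and `g = 0` elsewhere. Then
`1/(8v) ≤ ∫_v^∞ g ≤ 1/v` for `v ≥ 1`, which gives upper doubling of the weight itself. After
inserting `exp (β (1 - u))`, compare the tails at `2N - log 2` and at `2N` for `N = 4ⁿ`: the first
sees the right end of the block `[N, 2N]`, hence is at least of order `N⁻² exp (-2βN)`, whereas the
second only sees `u ≥ 4N`, hence is at most of order `N⁻¹ exp (-4βN)`. The quotient is unbounded.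
-/

open MeasureTheory Set

/-- The union of the blocks `[4ⁿ, 2·4ⁿ]`. -/
def blocks : Set ℝ := ⋃ n : ℕ, Icc ((4:ℝ) ^ n) (2 * 4 ^ n)

/-- The density `u⁻²` restricted to the blocks. -/
noncomputable def blockDensity : ℝ → ℝ := blocks.indicator fun u => u ^ (-2 : ℝ)

/-- The function on `[0,1)` whose tail at `r` is the tail of `g` at `1 - log (1 - r)`. -/
noncomputable def logLift (g : ℝ → ℝ) (r : ℝ) : ℝ := (1 - r)⁻¹ * g (1 - Real.log (1 - r))

lemma image_log_Ico {r : ℝ} (hr : r < 1) :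
    (fun s => 1 - Real.log (1 - s)) '' Ico r 1 = Ici (1 - Real.log (1 - r)) := by
  ext u
  simp only [mem_image, mem_Ico, mem_Ici]
  constructor
  · rintro ⟨s, ⟨h1, h2⟩, rfl⟩
    have := Real.log_le_log (by linarith : 0 < 1 - s) (by linarith : 1 - s ≤ 1 - r)
    linarith
  · intro h
    refine ⟨1 - Real.exp (1 - u), ⟨?_, ?_⟩, ?_⟩
    · have : Real.exp (1 - u) ≤ 1 - r := by
        rw [← Real.le_log_iff_exp_le (by linarith)]
        linarith
      linarith
    · have := Real.exp_pos (1 - u)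
      linarith
    · simp

lemma hasDeriv_log_lift {r s : ℝ} (hs : s ∈ Ico r 1) :
    HasDerivWithinAt (fun s => 1 - Real.log (1 - s)) ((1 - s)⁻¹) (Ico r 1) s := by
  have h : (1 - s) ≠ 0 := by linarith [hs.2]
  have := (((hasDerivAt_id s).const_sub 1).log h).const_sub 1
  refine (this.congr_deriv ?_).hasDerivWithinAt
  simp [neg_div]

lemma injOn_log_lift (r : ℝ) : InjOn (fun s => 1 - Real.log (1 - s)) (Ico r 1) := by
  intro a ha b hb hab
  have := Real.log_injOn_pos (show 1 - a ∈ Ioi 0 by simpa using ha.2)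
    (show 1 - b ∈ Ioi 0 by simpa using hb.2) (by simpa using hab)
  linarith

lemma tailInt_logLift (g : ℝ → ℝ) {r : ℝ} (hr : r < 1) :
    tailInt (logLift g) r = ∫ u in Ioi (1 - Real.log (1 - r)), g u := by
  rw [tailInt, intervalIntegral.integral_of_le hr.le, ← integral_Ici_eq_integral_Ioi,
    integral_Ioc_eq_integral_Ioo, ← integral_Ico_eq_integral_Ioo, ← image_log_Ico hr,
    integral_image_eq_integral_abs_deriv_smul measurableSet_Ico
      (fun s hs => hasDeriv_log_lift hs) (injOn_log_lift r)]
  refine setIntegral_congr_fun measurableSet_Ico fun s hs => ?_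
  have : 0 < (1 - s)⁻¹ := inv_pos.2 (by linarith [hs.2])
  simp [logLift, abs_of_pos this]

lemma integrableOn_logLift (g : ℝ → ℝ) (hg : IntegrableOn g (Ici 1)) :
    IntegrableOn (logLift g) (Ico 0 1) := by
  have him := image_log_Ico (r := 0) one_pos
  simp only [sub_zero, Real.log_one] at him
  rw [← him, integrableOn_image_iff_integrableOn_abs_deriv_smul measurableSet_Ico
    (fun s hs => hasDeriv_log_lift hs) (injOn_log_lift 0)] at hg
  refine hg.congr_fun (fun s hs => ?_) measurableSet_Ico
  have : 0 < (1 - s)⁻¹ := inv_pos.2 (by linarith [hs.2])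
  simp [logLift, abs_of_pos this]

lemma measurableSet_blocks : MeasurableSet blocks :=
  MeasurableSet.iUnion fun _ => measurableSet_Icc

lemma blockDensity_nonneg {u : ℝ} (hu : 0 ≤ u) : 0 ≤ blockDensity u :=
  indicator_apply_nonneg fun _ => Real.rpow_nonneg hu _

lemma blockDensity_le {u : ℝ} (hu : 0 ≤ u) : blockDensity u ≤ u ^ (-2 : ℝ) :=
  indicator_le_self' (fun _ _ => Real.rpow_nonneg hu _) u

lemma integrableOn_sq {v : ℝ} (hv : 0 < v) : IntegrableOn (fun u : ℝ => u ^ (-2 : ℝ)) (Ioi v) :=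
  integrableOn_Ioi_rpow_of_lt (by norm_num) hv

lemma integral_sq {v : ℝ} (hv : 0 < v) : ∫ u in Ioi v, u ^ (-2 : ℝ) = v⁻¹ := by
  rw [integral_Ioi_rpow_of_lt (by norm_num) hv]
  norm_num [Real.rpow_neg_one]

lemma integrableOn_blockDensity {v : ℝ} (hv : 0 < v) : IntegrableOn blockDensity (Ioi v) :=
  (integrableOn_sq hv).indicator measurableSet_blocks

lemma tail_blockDensity_le {v : ℝ} (hv : 0 < v) : ∫ u in Ioi v, blockDensity u ≤ v⁻¹ := by
  rw [← integral_sq hv]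
  exact setIntegral_mono_on (integrableOn_blockDensity hv) (integrableOn_sq hv) measurableSet_Ioi
    fun u hu => blockDensity_le (hv.trans hu).le

/-- The first block lying entirely to the right of `v` starts no later than `4 v`. -/
lemma le_tail_blockDensity {v : ℝ} (hv : 1 ≤ v) :
    (8 * v)⁻¹ ≤ ∫ u in Ioi v, blockDensity u := by
  obtain ⟨n, h1, h2⟩ := exists_nat_pow_near hv (by norm_num : (1:ℝ) < 4)
  set M : ℝ := 4 ^ (n + 1) with hM
  have hM4 : M ≤ 4 * v := by rw [hM, pow_succ]; linarith
  have hM0 : 0 < M := by positivity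
  have hsub : Ioc M (2 * M) ⊆ Ioi v := fun u hu => h2.trans hu.1
  have key : ∫ u in Ioc M (2 * M), blockDensity u = (2 * M)⁻¹ := by
    have : ∫ u in Ioc M (2 * M), blockDensity u = ∫ u in Ioc M (2 * M), u ^ (-2 : ℝ) := by
      refine setIntegral_congr_fun measurableSet_Ioc fun u hu => ?_
      have hS : u ∈ blocks := mem_iUnion.2 ⟨n + 1, hu.1.le, hu.2⟩
      exact indicator_of_mem hS _
    rw [this, ← intervalIntegral.integral_of_le (by linarith), integral_rpow]
    · norm_num [Real.rpow_neg_one]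
      field_simp
      norm_num
    · right
      refine ⟨by norm_num, ?_⟩
      rw [uIcc_of_le (by linarith)]
      exact fun h => absurd h.1 (by linarith)
  calc (8 * v)⁻¹ ≤ (2 * M)⁻¹ := by
        apply inv_anti₀ <;> linarith
    _ = _ := key.symm
    _ ≤ _ := setIntegral_mono_set (integrableOn_blockDensity (by linarith))
        (ae_restrict_of_forall_mem measurableSet_Ioi fun u hu =>
          blockDensity_nonneg (by linarith [mem_Ioi.1 hu])) hsub.eventuallyLE

lemma one_le_log_coord {r : ℝ} (hr : r ∈ Ico (0:ℝ) 1) : 1 ≤ 1 - Real.log (1 - r) := by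
  have := Real.log_nonpos (by linarith [hr.2] : 0 ≤ 1 - r) (by linarith [hr.1])
  linarith

lemma log_coord_half {r : ℝ} (hr : r < 1) :
    1 - Real.log (1 - (1 + r) / 2) = 1 - Real.log (1 - r) + Real.log 2 := by
  rw [show 1 - (1 + r) / 2 = (1 - r) / 2 by ring, Real.log_div (by linarith) (by norm_num)]
  ring

lemma radialWeight_block : RadialWeight (logLift blockDensity) := by
  refine ⟨fun r hr => ?_, ?_, fun r hr => ?_⟩
  · exact mul_nonneg (inv_nonneg.2 (by linarith [hr.2]))
      (blockDensity_nonneg (by linarith [one_le_log_coord hr]))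
  · exact integrableOn_logLift _
      ((integrableOn_Ici_iff_integrableOn_Ioi (by simp)).2 (integrableOn_blockDensity one_pos))
  · rw [tailInt_logLift _ hr.2]
    have := one_le_log_coord hr
    exact lt_of_lt_of_le (by positivity) (le_tail_blockDensity this)

lemma dhat_block : Dhat (logLift blockDensity) := by
  refine ⟨16, by norm_num, fun r hr => ?_⟩
  have hv := one_le_log_coord hr
  rw [tailInt_logLift _ hr.2, tailInt_logLift _ (by linarith [hr.2]), log_coord_half hr.2]
  set v := 1 - Real.log (1 - r)
  have hl0 := Real.log_pos one_lt_two
  have hl1 : Real.log 2 ≤ 1 := by linarith [Real.log_two_lt_d9]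
  have h1 := tail_blockDensity_le (v := v) (by linarith)
  have h2 := le_tail_blockDensity (v := v + Real.log 2) (by linarith)
  have h3 : v⁻¹ ≤ 16 * (8 * (v + Real.log 2))⁻¹ := by
    rw [← div_eq_mul_inv, inv_eq_one_div, div_le_div_iff₀ (by linarith) (by linarith)]
    linarith
  linarith

/-- The density in the variable `u` of the weight multiplied by `(1 - r)^β`. -/
noncomputable def dampedDensity (β u : ℝ) : ℝ := blockDensity u * Real.exp (β * (1 - u))

lemma tailInt_damped (β : ℝ) {r : ℝ} (hr : r < 1) :
    tailInt (fun s => logLift blockDensity s * (1 - s) ^ β) r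
      = ∫ u in Ioi (1 - Real.log (1 - r)), dampedDensity β u := by
  rw [← tailInt_logLift _ hr, tailInt, tailInt, intervalIntegral.integral_of_le hr.le,
    intervalIntegral.integral_of_le hr.le, integral_Ioc_eq_integral_Ioo,
    integral_Ioc_eq_integral_Ioo]
  refine setIntegral_congr_fun measurableSet_Ioo fun s hs => ?_
  have : 0 < 1 - s := by linarith [hs.2]
  simp only [logLift, dampedDensity]
  rw [Real.rpow_def_of_pos this, mul_assoc]
  congr 3
  ring

lemma dampedDensity_nonneg (β : ℝ) {u : ℝ} (hu : 0 ≤ u) : 0 ≤ dampedDensity β u :=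
  mul_nonneg (blockDensity_nonneg hu) (Real.exp_pos _).le

lemma integrableOn_damped {β : ℝ} (hβ : 0 < β) {v : ℝ} (hv : 1 ≤ v) :
    IntegrableOn (dampedDensity β) (Ioi v) := by
  refine (integrableOn_blockDensity (by linarith)).mono' ?_ ?_
  · exact (integrableOn_blockDensity (by linarith)).aestronglyMeasurable.mul
      (by fun_prop : Continuous fun u => Real.exp (β * (1 - u))).aestronglyMeasurable
  · refine ae_restrict_of_forall_mem measurableSet_Ioi fun u hu => ?_
    have hu1 : 1 ≤ u := hv.trans (mem_Ioi.1 hu).le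
    rw [Real.norm_of_nonneg (dampedDensity_nonneg β (by linarith))]
    refine mul_le_of_le_one_right (blockDensity_nonneg (by linarith)) (Real.exp_le_one_iff.2 ?_)
    nlinarith

/-- The tail at `2N` sees only the blocks starting from `4N` on. -/
lemma damped_tail_le {β : ℝ} (hβ : 0 < β) (n : ℕ) :
    ∫ u in Ioi (2 * (4:ℝ) ^ n), dampedDensity β u
      ≤ (2 * (4:ℝ) ^ n)⁻¹ * Real.exp (β * (1 - 4 * 4 ^ n)) := by
  have hN : (1:ℝ) ≤ 4 ^ n := one_le_pow₀ (by norm_num)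
  rw [← integral_sq (by linarith), ← integral_mul_const]
  refine setIntegral_mono_on (integrableOn_damped hβ (by linarith))
    ((integrableOn_sq (by linarith)).mul_const _) measurableSet_Ioi fun u hu => ?_
  have hu' : 2 * (4:ℝ) ^ n < u := hu
  have hu0 : 0 ≤ u := by linarith
  by_cases hS : u ∈ blocks
  · obtain ⟨k, hk1, hk2⟩ := mem_iUnion.1 hS
    have hnk : n + 1 ≤ k := by
      by_contra! h
      have : (4:ℝ) ^ k ≤ 4 ^ n := pow_le_pow_right₀ (by norm_num) (by omega)
      linarith
    have h4 : (4:ℝ) ^ (n + 1) ≤ 4 ^ k := pow_le_pow_right₀ (by norm_num) hnk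
    rw [pow_succ] at h4
    refine mul_le_mul (blockDensity_le hu0) (Real.exp_le_exp.2 ?_) (Real.exp_pos _).le
      (Real.rpow_nonneg hu0 _)
    exact mul_le_mul_of_nonneg_left (by linarith) hβ.le
  · rw [dampedDensity, blockDensity, indicator_of_notMem hS, zero_mul]
    exact mul_nonneg (Real.rpow_nonneg hu0 _) (Real.exp_pos _).le

lemma le_damped_tail {β : ℝ} (hβ : 0 < β) (n : ℕ) :
    Real.log 2 * ((2 * (4:ℝ) ^ n) ^ (-2 : ℝ) * Real.exp (β * (1 - 2 * 4 ^ n)))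
      ≤ ∫ u in Ioi (2 * (4:ℝ) ^ n - Real.log 2), dampedDensity β u := by
  have hN : (1:ℝ) ≤ 4 ^ n := one_le_pow₀ (by norm_num)
  have hl0 := Real.log_pos one_lt_two
  have hl1 : Real.log 2 ≤ 1 := by linarith [Real.log_two_lt_d9]
  set N : ℝ := 4 ^ n with hNdef
  have hint := integrableOn_damped hβ (v := 2 * N - Real.log 2) (by linarith)
  have hsub : Ioc (2 * N - Real.log 2) (2 * N) ⊆ Ioi (2 * N - Real.log 2) := fun u hu => hu.1
  calc _ = ∫ u in Ioc (2 * N - Real.log 2) (2 * N),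
          (2 * N) ^ (-2 : ℝ) * Real.exp (β * (1 - 2 * N)) := by
        rw [setIntegral_const, Real.volume_real_Ioc_of_le (by linarith), smul_eq_mul]
        congr 1
        ring
    _ ≤ ∫ u in Ioc (2 * N - Real.log 2) (2 * N), dampedDensity β u := by
        refine setIntegral_mono_on (integrableOn_const (by simp)) (hint.mono_set hsub)
          measurableSet_Ioc fun u hu => ?_
        have hu0 : 0 < u := by linarith [hu.1]
        have hS : u ∈ blocks := mem_iUnion.2 ⟨n, by linarith [hu.1], hu.2⟩
        rw [dampedDensity, blockDensity, indicator_of_mem hS]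
        refine mul_le_mul (Real.rpow_le_rpow_of_nonpos hu0 hu.2 (by norm_num))
          (Real.exp_le_exp.2 ?_) (Real.exp_pos _).le (Real.rpow_nonneg hu0.le _)
        exact mul_le_mul_of_nonneg_left (by linarith [hu.2]) hβ.le
    _ ≤ _ := setIntegral_mono_set hint
        (ae_restrict_of_forall_mem measurableSet_Ioi fun u hu =>
          dampedDensity_nonneg β (by linarith [mem_Ioi.1 hu])) hsub.eventuallyLE

lemma not_dhat_damped {β : ℝ} (hβ : 0 < β) :
    ¬ Dhat (fun r => logLift blockDensity r * (1 - r) ^ β) := by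
  rintro ⟨C, hC, h⟩
  have hl0 := Real.log_pos one_lt_two
  have hl1 : Real.log 2 ≤ 1 := by linarith [Real.log_two_lt_d9]
  have key : ∀ n : ℕ, β ^ 2 * Real.log 2 * 4 ^ n ≤ C := by
    intro n
    have hN : (1:ℝ) ≤ 4 ^ n := one_le_pow₀ (by norm_num)
    have hlow := le_damped_tail hβ n
    have hupp := damped_tail_le hβ n
    set N : ℝ := 4 ^ n
    -- The radius whose logarithmic coordinate is `2N - log 2`.
    set r : ℝ := 1 - Real.exp (1 - (2 * N - Real.log 2)) with hr
    have hrmem : r ∈ Ico (0:ℝ) 1 := by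
      have h1 := Real.exp_pos (1 - (2 * N - Real.log 2))
      have h2 := Real.exp_le_one_iff.2 (by linarith : 1 - (2 * N - Real.log 2) ≤ 0)
      constructor <;> linarith
    have hcoord : 1 - Real.log (1 - r) = 2 * N - Real.log 2 := by
      rw [hr, sub_sub_cancel, Real.log_exp]
      ring
    have h1 := h r hrmem
    rw [tailInt_damped β hrmem.2, tailInt_damped β (by linarith [hrmem.2]),
      log_coord_half hrmem.2, hcoord, sub_add_cancel] at h1
    have h2 := (hlow.trans h1).trans (mul_le_mul_of_nonneg_left hupp (by linarith))
    have hexp : Real.exp (β * (1 - 2 * N))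
        = Real.exp (β * (1 - 4 * N)) * Real.exp (2 * β * N) := by
      rw [← Real.exp_add]
      congr 1
      ring
    have hrp : (2 * N) ^ (-2 : ℝ) = ((2 * N) ^ 2)⁻¹ := by
      rw [Real.rpow_neg (by linarith)]
      norm_num
    rw [hexp, hrp] at h2
    have hE := Real.exp_pos (β * (1 - 4 * N))
    set E := Real.exp (β * (1 - 4 * N))
    have hq := Real.quadratic_le_exp_of_nonneg (by positivity : 0 ≤ 2 * β * N)
    set X := Real.exp (2 * β * N)
    have h3 : Real.log 2 * X ≤ C * (2 * N) := by
      have hpos : 0 < (2 * N) ^ 2 / E := by positivity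
      have h4 := mul_le_mul_of_nonneg_right h2 hpos.le
      have e1 : Real.log 2 * (((2 * N) ^ 2)⁻¹ * (E * X)) * ((2 * N) ^ 2 / E)
          = Real.log 2 * X := by field_simp
      have e2 : C * ((2 * N)⁻¹ * E) * ((2 * N) ^ 2 / E) = C * (2 * N) := by field_simp
      rwa [e1, e2] at h4
    have h5 : 2 * β ^ 2 * N ^ 2 ≤ X := by
      have : 0 ≤ 2 * β * N := by positivity
      nlinarith
    have h6 := mul_le_mul_of_nonneg_left h5 hl0.le
    refine le_of_mul_le_mul_right ?_ (by linarith : 0 < 2 * N)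
    nlinarith
  have hc : 0 < β ^ 2 * Real.log 2 := by positivity
  obtain ⟨n, hn⟩ := pow_unbounded_of_one_lt (C / (β ^ 2 * Real.log 2)) (by norm_num : (1:ℝ) < 4)
  rw [div_lt_iff₀' hc] at hn
  exact absurd (key n) (not_le.2 hn)

/-- For each `β > 0` there is a radial weight `ω ∈ D̂` such that
`ω_{[β]}(r) = ω(r)(1−r)^β` does not belong to `D̂`. -/
theorem statement12 (β : ℝ) (hβ : 0 < β) :
    ∃ ω : ℝ → ℝ, RadialWeight ω ∧ Dhat ω ∧
      ¬ Dhat (fun r => ω r * (1 - r) ^ β) :=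
  ⟨logLift blockDensity, radialWeight_block, dhat_block, not_dhat_damped hβ⟩
end

section
/- Let ω ∈ D̂ be a radial weight such that ω̃ is a weight. Then ω̃ ∈ D̂; indeed, with C the doubling constant of ω, one has ∫_r^1 ω̃(s) ds ≤ C ∫_{(1+r)/2}^1 ω̃(u) du for all 0 ≤ r < 1 (up to an absolute multiplicative constant). -/
/-! Doubling gives the pointwise bound `ω̃(s) ≤ (C/2) ω̃((1+s)/2)`, because
`1 - (1+s)/2 = (1-s)/2`. Integrating over `[r,1]` and substituting `u = (1+s)/2`, `ds = 2 du`,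
gives the inequality with absolute constant `c = 1`. -/

open MeasureTheory Set

/-- If `ω ∈ D̂` with doubling constant `C` and `ω̃` is a weight, then `ω̃ ∈ D̂`;
indeed `∫_r^1 ω̃(s) ds ≤ c · C · ∫_{(1+r)/2}^1 ω̃(u) du` for all `0 ≤ r < 1`, where `c > 0`
is an absolute constant. -/
theorem statement14 :
    ∃ c : ℝ, 0 < c ∧ ∀ ω : ℝ → ℝ, ∀ C : ℝ, RadialWeight ω → 1 ≤ C →
      (∀ r ∈ Set.Ico (0:ℝ) 1, tailInt ω r ≤ C * tailInt ω ((1 + r) / 2)) →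
      MeasureTheory.IntegrableOn (assocW ω) (Set.Ico 0 1) →
      ∀ r ∈ Set.Ico (0:ℝ) 1,
        tailInt (assocW ω) r ≤ c * C * tailInt (assocW ω) ((1 + r) / 2) := by
  refine ⟨1, one_pos, ?_⟩
  intro ω C _ _ hC hint r hr
  have hpt : ∀ s ∈ Icc r 1, assocW ω s ≤ C / 2 * assocW ω (1 / 2 * s + 1 / 2) := by
    intro s hs
    rcases hs.2.lt_or_eq with h1 | rfl
    · have h := hC s ⟨hr.1.trans hs.1, h1⟩
      have hpos : 0 < 1 - s := by linarith
      have e : C / 2 * assocW ω (1 / 2 * s + 1 / 2) = C * tailInt ω ((1 + s) / 2) / (1 - s) := by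
        have e1 : 1 / 2 * s + 1 / 2 = (1 + s) / 2 := by ring
        have e2 : 1 - (1 + s) / 2 = (1 - s) / 2 := by ring
        rw [e1, assocW, e2]
        field_simp
      rw [e, assocW]
      gcongr
    -- at the endpoint both sides are `0 / 0 = 0`
    · norm_num [assocW]
  have hsub : ∀ a ∈ Ico (0 : ℝ) 1, IntervalIntegrable (assocW ω) volume a 1 := by
    intro a ha
    rw [intervalIntegrable_iff_integrableOn_Ico_of_le ha.2.le]
    exact hint.mono_set (Ico_subset_Ico_left ha.1)
  have hcomp : IntervalIntegrable (fun s => assocW ω (1 / 2 * s + 1 / 2)) volume r 1 := by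
    have h := hsub ((1 + r) / 2) ⟨by linarith [hr.1], by linarith [hr.2]⟩
    have h2 := (h.comp_add_right (1 / 2)).comp_mul_left (c := 1 / 2)
    convert h2 using 1 <;> ring
  have hmono := intervalIntegral.integral_mono_on hr.2.le (hsub r hr) (hcomp.const_mul (C / 2)) hpt
  rw [intervalIntegral.integral_const_mul,
    intervalIntegral.integral_comp_mul_add (assocW ω) (by norm_num : (1 / 2 : ℝ) ≠ 0)] at hmono
  have e1 : 1 / 2 * r + 1 / 2 = (1 + r) / 2 := by ring
  have e2 : (1 / 2 * 1 + 1 / 2 : ℝ) = 1 := by norm_num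
  rw [e1, e2, smul_eq_mul] at hmono
  unfold tailInt
  linarith
end

section
/- Let ψ : [1,∞) → (0,∞) be an increasing function satisfying ψ(x+1) − ψ(x) ≤ C/x for all x ≥ 1 and some constant C > 0, and let C₁ > 0. Then ∫_x^∞ 2^{−C₁ψ(y)} y^{−2} dy ≍ x^{−1} 2^{−C₁ψ(x)} for all 1 ≤ x < ∞, with comparability constants depending only on C and C₁; in particular ∫_x^∞ 2^{−C₁ψ(y)} y^{−2} dy ≤ x^{−1} 2^{−C₁ψ(x)} and ∫_x^∞ 2^{−C₁ψ(y)} y^{−2} dy ≥ 2^{−(C₁C₂+1)} x^{−1} 2^{−C₁ψ(x)} for a constant C₂ = C₂(C) > 0. -/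
/-!
Upper bound: `ψ` is nondecreasing, so the integrand is at most `2^{-C₁ψ(x)} y^{-2}` on `(x, ∞)`,
and `∫_x^∞ y^{-2} dy = 1/x`.

Lower bound: `ψ(2x) ≤ ψ(x) + 2C` (`psi_two_mul_le`), obtained by summing the increment bound over
`⌈x⌉ ≤ 2x` unit steps starting at `x`, each costing at most `C/x`. Hence the integrand is at least
`2^{-C₁(ψ(x) + 2C)} y^{-2}` on `(x, 2x]`, and `∫_x^{2x} y^{-2} dy = 1/(2x)`, so `C₂ = 2C` works.
-/

open MeasureTheory Set

lemma psi_add_nat_le {C : ℝ} (hC : 0 < C) {ψ : ℝ → ℝ}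
    (hψ : ∀ x ∈ Set.Ici (1:ℝ), ψ (x + 1) - ψ x ≤ C / x) {x : ℝ} (hx : 1 ≤ x) (n : ℕ) :
    ψ (x + n) ≤ ψ x + n * (C / x) := by
  induction n with
  | zero => simp
  | succ k ih =>
    have hk : (0:ℝ) ≤ k := k.cast_nonneg
    have h1 := hψ (x + k) (by simp only [Set.mem_Ici]; linarith)
    have h2 : C / (x + k) ≤ C / x := by gcongr; linarith
    push_cast
    rw [← add_assoc]
    linarith

/-- The increment condition makes `ψ` grow by at most a constant under doubling. -/
lemma psi_two_mul_le {C : ℝ} (hC : 0 < C) {ψ : ℝ → ℝ} (hmono : MonotoneOn ψ (Set.Ici (1:ℝ)))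
    (hψ : ∀ x ∈ Set.Ici (1:ℝ), ψ (x + 1) - ψ x ≤ C / x) {x : ℝ} (hx : 1 ≤ x) :
    ψ (2 * x) ≤ ψ x + 2 * C := by
  have h0 : 0 < x := by linarith
  have h1 : x ≤ (⌈x⌉₊ : ℝ) := Nat.le_ceil x
  have h2 : (⌈x⌉₊ : ℝ) < x + 1 := Nat.ceil_lt_add_one h0.le
  have h3 : ψ (2 * x) ≤ ψ (x + ⌈x⌉₊) :=
    hmono (by simp only [Set.mem_Ici]; linarith) (by simp only [Set.mem_Ici]; linarith)
      (by linarith)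
  have h4 := psi_add_nat_le hC hψ hx ⌈x⌉₊
  have h5 : (⌈x⌉₊ : ℝ) * (C / x) ≤ 2 * x * (C / x) := by gcongr; linarith
  have h6 : 2 * x * (C / x) = 2 * C := by field_simp
  linarith

lemma integrableOn_inv_sq {x : ℝ} (hx : 0 < x) :
    IntegrableOn (fun y : ℝ => (y ^ 2)⁻¹) (Set.Ioi x) := by
  have h := integrableOn_Ioi_rpow_of_lt (a := -2) (by norm_num) hx
  refine h.congr_fun (fun y hy => ?_) measurableSet_Ioi
  have hy0 : 0 < y := hx.trans hy
  simp only [Real.rpow_neg hy0.le, Real.rpow_ofNat]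

lemma integral_inv_sq {x : ℝ} (hx : 0 < x) :
    ∫ y in Set.Ioi x, (y ^ 2)⁻¹ = x⁻¹ := by
  have h := integral_Ioi_rpow_of_lt (a := -2) (by norm_num) hx
  have h1 : ∫ y in Set.Ioi x, (y ^ 2)⁻¹ = ∫ y in Set.Ioi x, y ^ (-2 : ℝ) := by
    refine setIntegral_congr_fun measurableSet_Ioi (fun y hy => ?_)
    have hy0 : 0 < y := hx.trans hy
    simp only [Real.rpow_neg hy0.le, Real.rpow_ofNat]
  rw [h1, h]
  norm_num [Real.rpow_neg_one]

lemma integral_Ioc_inv_sq {x : ℝ} (hx : 0 < x) :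
    ∫ y in Set.Ioc x (2 * x), (y ^ 2)⁻¹ = 2⁻¹ * x⁻¹ := by
  have hx2 : x ≤ 2 * x := by linarith
  have hi := integrableOn_inv_sq hx
  have h := setIntegral_union (μ := volume) (f := fun y : ℝ => (y ^ 2)⁻¹)
    (Set.Ioc_disjoint_Ioi (le_refl (2 * x)) (a := x)) measurableSet_Ioi
    (hi.mono_set Set.Ioc_subset_Ioi_self) (hi.mono_set (Set.Ioi_subset_Ioi hx2))
  rw [Set.Ioc_union_Ioi_eq_Ioi hx2, integral_inv_sq hx,
    integral_inv_sq (by linarith : 0 < 2 * x), mul_inv] at h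
  linarith

/-- If `ψ : [1,∞) → (0,∞)` is increasing with `ψ(x+1) − ψ(x) ≤ C/x` and
`C₁ > 0`, then `∫_x^∞ 2^{−C₁ψ(y)} y^{−2} dy ≍ x⁻¹ 2^{−C₁ψ(x)}` on `[1,∞)`: the upper bound
holds with constant `1` and the lower bound with constant `2^{−(C₁C₂+1)}` for some
`C₂ = C₂(C) > 0`. -/
theorem statement16 (C : ℝ) (hC : 0 < C) :
    ∃ C₂ : ℝ, 0 < C₂ ∧
      ∀ ψ : ℝ → ℝ, (∀ x ∈ Set.Ici (1:ℝ), 0 < ψ x) → MonotoneOn ψ (Set.Ici (1:ℝ)) →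
        (∀ x ∈ Set.Ici (1:ℝ), ψ (x + 1) - ψ x ≤ C / x) →
        ∀ C₁ : ℝ, 0 < C₁ → ∀ x ∈ Set.Ici (1:ℝ),
          (∫ y in Set.Ioi x, (2:ℝ) ^ (-(C₁ * ψ y)) / y ^ 2) ≤ (2:ℝ) ^ (-(C₁ * ψ x)) / x ∧
          (2:ℝ) ^ (-(C₁ * C₂ + 1)) * ((2:ℝ) ^ (-(C₁ * ψ x)) / x) ≤
            ∫ y in Set.Ioi x, (2:ℝ) ^ (-(C₁ * ψ y)) / y ^ 2 := by
  refine ⟨2 * C, by linarith, ?_⟩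
  intro ψ _ hmono hψ C₁ hC₁ x hx
  have hx1 : 1 ≤ x := hx
  have hx0 : 0 < x := by linarith
  have hx2 : x ≤ 2 * x := by linarith
  have hsub : Set.Ioi x ⊆ Set.Ici 1 := fun y hy => hx1.trans (le_of_lt hy)
  have hanti : AntitoneOn (fun y => (2:ℝ) ^ (-(C₁ * ψ y))) (Set.Ici 1) := by
    intro a ha b hb hab
    have := hmono ha hb hab
    apply Real.rpow_le_rpow_of_exponent_le (by norm_num)
    gcongr
  have hi := integrableOn_inv_sq hx0
  have hmaj : IntegrableOn (fun y : ℝ => (2:ℝ) ^ (-(C₁ * ψ x)) * (y ^ 2)⁻¹) (Set.Ioi x) :=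
    hi.const_mul _
  have hle : ∀ y ∈ Set.Ioi x, (2:ℝ) ^ (-(C₁ * ψ y)) / y ^ 2 ≤
      (2:ℝ) ^ (-(C₁ * ψ x)) * (y ^ 2)⁻¹ := by
    intro y hy
    rw [div_eq_mul_inv]
    exact mul_le_mul_of_nonneg_right (hanti hx (hsub hy) (le_of_lt hy)) (by positivity)
  have hint : IntegrableOn (fun y : ℝ => (2:ℝ) ^ (-(C₁ * ψ y)) / y ^ 2) (Set.Ioi x) := by
    have hm : AEMeasurable (fun y => (2:ℝ) ^ (-(C₁ * ψ y))) (volume.restrict (Set.Ioi x)) :=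
      aemeasurable_restrict_of_antitoneOn measurableSet_Ioi (hanti.mono hsub)
    refine Integrable.mono' hmaj (hm.div (by fun_prop)).aestronglyMeasurable ?_
    filter_upwards [ae_restrict_mem measurableSet_Ioi] with y hy
    rw [Real.norm_of_nonneg (by positivity)]
    exact hle y hy
  constructor
  · calc _ ≤ ∫ y in Set.Ioi x, (2:ℝ) ^ (-(C₁ * ψ x)) * (y ^ 2)⁻¹ :=
          setIntegral_mono_on hint hmaj measurableSet_Ioi hle
      _ = _ := by rw [integral_const_mul, integral_inv_sq hx0, div_eq_mul_inv]
  · have hsub2 : Set.Ioc x (2 * x) ⊆ Set.Ioi x := Set.Ioc_subset_Ioi_self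
    calc _ = ∫ y in Set.Ioc x (2 * x), (2:ℝ) ^ (-(C₁ * (ψ x + 2 * C))) * (y ^ 2)⁻¹ := by
          rw [integral_const_mul, integral_Ioc_inv_sq hx0,
            show -(C₁ * (ψ x + 2 * C)) = -(C₁ * (2 * C)) + -(C₁ * ψ x) by ring,
            show -(C₁ * (2 * C) + 1) = -(C₁ * (2 * C)) + -1 by ring,
            Real.rpow_add (by norm_num), Real.rpow_add (by norm_num), Real.rpow_neg_one]
          ring
      _ ≤ ∫ y in Set.Ioc x (2 * x), (2:ℝ) ^ (-(C₁ * ψ y)) / y ^ 2 := by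
          refine setIntegral_mono_on ((hi.mono_set hsub2).const_mul _) (hint.mono_set hsub2)
            measurableSet_Ioc (fun y hy => ?_)
          have h1 : ψ y ≤ ψ (2 * x) :=
            hmono (hsub (hsub2 hy)) (Set.mem_Ici.2 (hx1.trans hx2)) hy.2
          have h2 := psi_two_mul_le hC hmono hψ hx1
          rw [div_eq_mul_inv]
          refine mul_le_mul_of_nonneg_right ?_ (by positivity)
          apply Real.rpow_le_rpow_of_exponent_le (by norm_num)
          have h3 : C₁ * ψ y ≤ C₁ * (ψ x + 2 * C) :=
            mul_le_mul_of_nonneg_left (h1.trans h2) hC₁.le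
          linarith
      _ ≤ _ := by
          refine setIntegral_mono_set hint ?_ hsub2.eventuallyLE
          filter_upwards with y
          simp only [Pi.zero_apply]
          positivity
end

section
/- Let ω ∈ D = D̂ ∩ Ď be a radial weight. Then there exists a constant C = C(ω) > 0 such that ‖f‖_{A^1_ω} ≤ C ( |f(0)| + ‖Re f‖_{L^1_ω} ) for every analytic function f on 𝔻. -/
/-!
Write `A`, `B`, `N` for the circle integrals (`circleL1`) of `f`, `f'` and `Re f`. Conjugation is
not bounded on `L¹` of the circle, so `A` is not bounded by `N` radius by radius; but `f'` is, up
to one power of the distance: the derivative of Schwarz's formula (`deriv_eq_circleAverage_re`)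
expresses `f'` inside the circle of radius `u` through `Re f` on it, with a kernel whose modulus is
a multiple of the Poisson kernel, and this gives `B(s) ≤ 2 N(u) / (u - s)` for all `s < u < 1`
(`circleL1_deriv_le`).

Integrating `f'` along radii, `A(r) ≤ 2π |f(0)| + ∫_0^r B`, hence after Tonelli
`∫ A(r) r ω(r) dr ≤ 2π |f(0)| ω̂(0) + ∫ B(s) ω̂(s) ds` (`lintegral_circleL1_le`). The two doubling conditions
bound `ω̂(s)` by a constant times the mass of `ω` on an interval on which `1 - u` is
comparable to, and at most half of, `1 - s` (`lintegral_tail_le`). There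
`B(s) ≤ C N(u) / (1 - u)`, and for fixed `u` the possible `s` form an interval of length
comparable to `1 - u`, so a second use of Tonelli gives `∫ B ω̂ ≤ C ∫ N(u) u ω(u) du`
(`lintegral_mul_tail_le`).

Everything is done with `[0, ∞]`-valued integrals. If `|f| ω` is not integrable, `ApNorm 1 ω f`
is `0` by convention; otherwise `|Re f| ω` is integrable as well and the integrals agree.
-/

open MeasureTheory Set

namespace RePartEstimate

open Metric Complex ComplexConjugate ENNReal

/-! ### Schwarz's formula and the Poisson kernel -/

lemma sub_ne_zero_of_sphere {u : ℝ} {z ζ : ℂ} (hz : ‖z‖ < u) (hζ : ζ ∈ sphere (0:ℂ) u) :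
    ζ - z ≠ 0 := by
  rw [sub_ne_zero]; rintro rfl
  simp at hζ; linarith

/-- Schwarz's formula, differentiated: `f'` inside a circle in terms of `Re f` on that circle. -/
lemma deriv_eq_circleAverage_re {f : ℂ → ℂ} {u : ℝ} {z : ℂ}
    (hf : DifferentiableOn ℂ f (ball 0 1)) (hu1 : u < 1) (hz : ‖z‖ < u) :
    deriv f z = Real.circleAverage (fun ζ => ζ / (ζ - z) ^ 2 * ((2 * (f ζ).re : ℝ) : ℂ)) 0 u := by
  have hu : 0 < u := (norm_nonneg z).trans_lt hz
  have hsub : closedBall (0:ℂ) u ⊆ ball 0 1 := closedBall_subset_ball hu1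
  have hfc : ContinuousOn f (closedBall 0 u) := hf.continuousOn.mono hsub
  have hfs : ContinuousOn f (sphere 0 u) := hfc.mono sphere_subset_closedBall
  have hne : ∀ ζ ∈ sphere (0:ℂ) u, (ζ - z) ^ 2 ≠ 0 := fun ζ h =>
    pow_ne_zero _ (sub_ne_zero_of_sphere hz h)
  have hk : ContinuousOn (fun ζ : ℂ => ζ / (ζ - z) ^ 2) (sphere 0 u) :=
    continuousOn_id.div (by fun_prop) hne
  have ha : Real.circleAverage (fun ζ => ζ / (ζ - z) ^ 2 * f ζ) 0 u = deriv f z := by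
    rw [Real.circleAverage_eq_circleIntegral hu.ne',
      ← two_pi_I_inv_smul_circleIntegral_sub_sq_inv_smul_of_differentiable isOpen_ball hsub hf
        (w₀ := z) (by simpa using hz)]
    congr 1
    refine circleIntegral.integral_congr hu.le fun ζ hζ => ?_
    have h0 : ζ ≠ 0 := by rintro rfl; simp at hζ; linarith
    have := hne ζ hζ
    simp only [smul_eq_mul, sub_zero]
    field_simp
  have hb : Real.circleAverage (fun ζ => conj (ζ / (ζ - z) ^ 2) * f ζ) 0 u = 0 := by
    have hd : ∀ ζ ∈ closedBall (0:ℂ) u, ((u:ℂ) ^ 2 - conj z * ζ) ^ 2 ≠ 0 := by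
      intro ζ hζ
      apply pow_ne_zero
      rw [sub_ne_zero]
      intro h
      have h2 : u ^ 2 = ‖z‖ * ‖ζ‖ := by
        have := congrArg norm h
        simpa [abs_of_pos hu] using this
      have : ‖ζ‖ ≤ u := by simpa using hζ
      nlinarith [norm_nonneg z, norm_nonneg ζ]
    -- on `|ζ| = u` one has `conj ζ = u² / ζ`, which turns the kernel into an analytic function
    have hcongr : Real.circleAverage (fun ζ => conj (ζ / (ζ - z) ^ 2) * f ζ) 0 u =
        Real.circleAverage (fun ζ => (u:ℂ) ^ 2 * ζ / ((u:ℂ) ^ 2 - conj z * ζ) ^ 2 * f ζ) 0 u := by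
      refine Real.circleAverage_congr_sphere fun ζ hζ => ?_
      rw [abs_of_pos hu] at hζ
      have h0 : ζ ≠ 0 := by rintro rfl; simp at hζ; linarith
      have hc : conj ζ = (u:ℂ) ^ 2 / ζ := by
        rw [eq_div_iff h0, mul_comm, mul_conj, normSq_eq_norm_sq]
        simp at hζ; simp [hζ]
      have h1 := hd ζ (sphere_subset_closedBall hζ)
      have h2 : (u:ℂ) ^ 2 / ζ - conj z ≠ 0 := by
        intro h
        apply h1
        rw [sub_eq_zero, div_eq_iff h0] at h
        rw [h]; simp
      have h3 : (u:ℂ) ^ 2 - conj z * ζ ≠ 0 := fun h => h1 (by rw [h]; simp)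
      simp only [map_div₀, map_pow, map_sub, hc]
      congr 1
      have : (u:ℂ) ^ 2 / ζ - conj z = ((u:ℂ) ^ 2 - conj z * ζ) / ζ := by field_simp
      rw [this]
      field_simp
    rw [hcongr]
    have := DiffContOnCl.circleAverage (c := (0:ℂ)) (R := u)
      (f := fun ζ => (u:ℂ) ^ 2 * ζ / ((u:ℂ) ^ 2 - conj z * ζ) ^ 2 * f ζ) (by
        rw [abs_of_pos hu]
        apply DifferentiableOn.diffContOnCl
        rw [closure_ball _ hu.ne']
        exact (DifferentiableOn.div (by fun_prop) (by fun_prop) hd).mul (hf.mono hsub))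
    rw [this]; simp
  have hb' : Real.circleAverage (fun ζ => ζ / (ζ - z) ^ 2 * conj (f ζ)) 0 u = 0 := by
    have := congrArg conj hb
    rw [Real.circleAverage_def, real_smul, map_mul, intervalIntegral.integral_of_le (by positivity),
      ← integral_conj] at this
    rw [Real.circleAverage_def, real_smul, intervalIntegral.integral_of_le (by positivity)]
    simpa using this
  have hsum : Real.circleAverage (fun ζ => ζ / (ζ - z) ^ 2 * ((2 * (f ζ).re : ℝ) : ℂ)) 0 u =
      Real.circleAverage ((fun ζ => ζ / (ζ - z) ^ 2 * f ζ) +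
        (fun ζ => ζ / (ζ - z) ^ 2 * conj (f ζ))) 0 u := by
    congr 1; ext1 ζ
    simp only [Pi.add_apply, ← mul_add, add_conj]
  rw [hsum, Real.circleAverage_add, ha, hb', add_zero]
  · exact (hk.mul hfs).circleIntegrable hu.le
  · exact (hk.mul (continuous_conj.comp_continuousOn hfs)).circleIntegrable hu.le

/-- The circle integral of `1 / |ζ - z|²` (the Poisson kernel up to a factor) over the interior
variable `z`, from the mean value property of `z ↦ (ζ + z) / (ζ - z)`. -/
lemma lintegral_kernel {u s : ℝ} (hs : 0 ≤ s) (hsu : s < u) (ζ : ℂ) (hζ : ‖ζ‖ = u) :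
    ∫⁻ φ in Ioc 0 (2 * Real.pi), ENNReal.ofReal (1 / ‖ζ - circleMap 0 s φ‖ ^ 2) =
      ENNReal.ofReal (2 * Real.pi / (u ^ 2 - s ^ 2)) := by
  have hpos : 0 < u ^ 2 - s ^ 2 := by nlinarith
  have hne : ∀ w : ℂ, ‖w‖ ≤ s → ζ - w ≠ 0 := by
    intro w hw h
    rw [sub_eq_zero] at h; subst h; linarith
  have hd : DifferentiableOn ℂ (fun w : ℂ => (ζ + w) / (ζ - w)) (closedBall 0 s) :=
    DifferentiableOn.div (by fun_prop) (by fun_prop) fun w hw => hne w (by simpa using hw)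
  have hn : ∀ φ, ‖circleMap 0 s φ‖ = s := fun φ => by simp [abs_of_nonneg hs]
  have hcont : Continuous fun φ : ℝ => (ζ + circleMap 0 s φ) / (ζ - circleMap 0 s φ) :=
    Continuous.div (by fun_prop) (by fun_prop) fun φ => hne _ (hn φ).le
  have havg : Real.circleAverage (fun w : ℂ => (ζ + w) / (ζ - w)) 0 s = 1 := by
    have hζ0 : ζ ≠ 0 := by simpa using hne 0 (by simpa using hs)
    rcases hs.eq_or_lt with rfl | hs'
    · simp [Real.circleAverage_def, hζ0]
      field_simp
    rw [DiffContOnCl.circleAverage]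
    · simp [hζ0]
    · rw [abs_of_nonneg hs]
      apply DifferentiableOn.diffContOnCl
      rwa [closure_ball _ hs'.ne']
  have hre : ∀ φ, 1 / ‖ζ - circleMap 0 s φ‖ ^ 2 =
      (u ^ 2 - s ^ 2)⁻¹ * ((ζ + circleMap 0 s φ) / (ζ - circleMap 0 s φ)).re := by
    intro φ
    have h1 := hn φ
    have h2 := hne _ h1.le
    generalize circleMap 0 s φ = w at h1 h2
    have h3 : 0 < normSq (ζ - w) := normSq_pos.2 h2
    have h4 : u ^ 2 - s ^ 2 = normSq ζ - normSq w := by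
      rw [normSq_eq_norm_sq, normSq_eq_norm_sq, hζ, h1]
    rw [← normSq_eq_norm_sq, h4, div_re, ← add_div]
    rw [h4] at hpos
    field_simp
    simp [normSq_apply]; ring
  have hint : ∫ φ in Ioc 0 (2 * Real.pi), 1 / ‖ζ - circleMap 0 s φ‖ ^ 2 =
      2 * Real.pi / (u ^ 2 - s ^ 2) := by
    simp_rw [hre]
    rw [integral_const_mul]
    have h1 := congrArg re havg
    rw [Real.circleAverage_def, smul_re, intervalIntegral.integral_of_le (by positivity)] at h1
    have h2 := integral_re (𝕜 := ℂ) (μ := volume.restrict (Ioc 0 (2 * Real.pi))) (hcont.integrableOn_Ioc)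
    simp only [RCLike.re_eq_complex_re] at h2
    rw [h2]
    have hpi := Real.pi_pos
    simp only [one_re, smul_eq_mul] at h1
    field_simp at h1 ⊢
    linarith
  rw [← hint, ofReal_integral_eq_lintegral_ofReal]
  · simp_rw [hre]
    exact ((continuous_re.comp hcont).const_mul _ |>.integrableOn_Ioc)
  · exact Filter.Eventually.of_forall fun φ => by positivity

/-! ### Circle means of `f`, `f'` and `Re f` -/

/-- The circle integral `∫ |g(r e^{iθ})| dθ` over a full period, with values in `[0, ∞]`. -/
noncomputable def circleL1 {E : Type*} [ENorm E] (g : ℂ → E) (r : ℝ) : ℝ≥0∞ :=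
  ∫⁻ θ in Ioc 0 (2 * Real.pi), ‖g (circleMap 0 r θ)‖ₑ

lemma measurable_circleMap_uncurry : Measurable fun p : ℝ × ℝ => circleMap 0 p.1 p.2 := by
  unfold circleMap; fun_prop

lemma measurable_circleL1 {E : Type*} [NormedAddCommGroup E] [MeasurableSpace E] [BorelSpace E] {g : ℂ → E}
    (hg : Measurable g) : Measurable (circleL1 g) :=
  Measurable.lintegral_prod_right' (f := fun p : ℝ × ℝ => ‖g (circleMap 0 p.1 p.2)‖ₑ)
    (hg.comp measurable_circleMap_uncurry).enorm

/-- The means of `f'` are controlled by the means of `Re f` on any larger circle. -/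
lemma circleL1_deriv_le {f : ℂ → ℂ} (hfm : Measurable f) (hf : DifferentiableOn ℂ f (ball 0 1))
    {s u : ℝ} (hs : 0 ≤ s) (hsu : s < u) (hu1 : u < 1) :
    circleL1 (deriv f) s ≤ ENNReal.ofReal (2 / (u - s)) * circleL1 (fun z => (f z).re) u := by
  have hu : 0 < u := hs.trans_lt hsu
  set c : ℝ≥0∞ := ENNReal.ofReal (u / Real.pi) with hc
  have hpt : ∀ φ : ℝ, ‖deriv f (circleMap 0 s φ)‖ₑ ≤
      ∫⁻ θ in Ioc 0 (2 * Real.pi), c * (‖(f (circleMap 0 u θ)).re‖ₑ *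
        ENNReal.ofReal (1 / ‖circleMap 0 u θ - circleMap 0 s φ‖ ^ 2)) := by
    intro φ
    rw [deriv_eq_circleAverage_re hf hu1 (by simpa [abs_of_nonneg hs] using hsu),
      Real.circleAverage_def, intervalIntegral.integral_of_le (by positivity), ← integral_smul]
    refine (enorm_integral_le_lintegral_enorm _).trans_eq (lintegral_congr fun θ => ?_)
    rw [← ofReal_norm, ← ofReal_norm, hc,
      ← ENNReal.ofReal_mul (by positivity), ← ENNReal.ofReal_mul (by positivity)]
    congr 1
    have hpi := Real.pi_pos
    simp only [norm_smul, norm_mul, norm_div, norm_pow, norm_circleMap_zero, abs_of_pos hu,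
      norm_real, norm_inv, Real.norm_eq_abs, abs_of_pos hpi]
    norm_num
    field_simp
  have hm : Measurable (Function.uncurry fun φ θ : ℝ => c * (‖(f (circleMap 0 u θ)).re‖ₑ *
        ENNReal.ofReal (1 / ‖circleMap 0 u θ - circleMap 0 s φ‖ ^ 2))) := by
    unfold circleMap Function.uncurry
    fun_prop
  calc circleL1 (deriv f) s
      ≤ ∫⁻ φ in Ioc 0 (2 * Real.pi), ∫⁻ θ in Ioc 0 (2 * Real.pi), c * (‖(f (circleMap 0 u θ)).re‖ₑ *
        ENNReal.ofReal (1 / ‖circleMap 0 u θ - circleMap 0 s φ‖ ^ 2)) := lintegral_mono hpt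
    _ = ∫⁻ θ in Ioc 0 (2 * Real.pi), ∫⁻ φ in Ioc 0 (2 * Real.pi), c * (‖(f (circleMap 0 u θ)).re‖ₑ *
        ENNReal.ofReal (1 / ‖circleMap 0 u θ - circleMap 0 s φ‖ ^ 2)) :=
      lintegral_lintegral_swap hm.aemeasurable
    _ = ∫⁻ θ in Ioc 0 (2 * Real.pi), c * (‖(f (circleMap 0 u θ)).re‖ₑ *
        ENNReal.ofReal (2 * Real.pi / (u ^ 2 - s ^ 2))) := by
      refine lintegral_congr fun θ => ?_
      rw [lintegral_const_mul' _ _ (by simp [hc]), lintegral_const_mul' _ _ (by simp),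
        lintegral_kernel hs hsu _ (by simp [abs_of_pos hu])]
    _ = c * ENNReal.ofReal (2 * Real.pi / (u ^ 2 - s ^ 2)) * circleL1 (fun z => (f z).re) u := by
      rw [circleL1, ← lintegral_const_mul' _ _ (by simp [hc, ENNReal.mul_eq_top])]
      refine lintegral_congr fun θ => ?_
      ring
    _ ≤ _ := by
      gcongr
      rw [hc, ← ENNReal.ofReal_mul (by positivity)]
      apply ENNReal.ofReal_le_ofReal
      have h1 : 0 < u - s := by linarith
      have h2 : u ^ 2 - s ^ 2 = (u - s) * (u + s) := by ring
      have h3 : 0 < u + s := by linarith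
      have hpi := Real.pi_pos
      rw [h2, div_mul_div_comm, div_le_div_iff₀ (by positivity) h1]
      nlinarith [mul_nonneg (mul_nonneg hpi.le h1.le) hs]

/-- Integrating `f'` along radii. -/
lemma circleL1_le {f : ℂ → ℂ} (hf : DifferentiableOn ℂ f (ball 0 1))
    {r : ℝ} (hr : 0 ≤ r) (hr1 : r < 1) :
    circleL1 f r ≤ ENNReal.ofReal (2 * Real.pi) * ‖f 0‖ₑ +
      ∫⁻ s in Ioc 0 r, circleL1 (deriv f) s := by
  have hpt : ∀ θ : ℝ, ‖f (circleMap 0 r θ)‖ₑ ≤ ‖f 0‖ₑ +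
      ∫⁻ s in Ioc 0 r, ‖deriv f (circleMap 0 s θ)‖ₑ := by
    intro θ
    have hmem : ∀ s ∈ Icc 0 r, circleMap 0 s θ ∈ ball (0:ℂ) 1 := by
      intro s hs
      simp [abs_of_nonneg hs.1]; linarith [hs.2]
    have hder : ∀ s ∈ uIcc 0 r, HasDerivAt (fun s : ℝ => f (circleMap 0 s θ))
        (deriv f (circleMap 0 s θ) * exp (θ * I)) s := by
      intro s hs
      rw [uIcc_of_le hr] at hs
      have h1 := (hf.differentiableAt (isOpen_ball.mem_nhds (hmem s hs))).hasDerivAt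
      have h2 : HasDerivAt (fun s : ℝ => circleMap 0 s θ) (exp (θ * I)) s := by
        unfold circleMap
        simpa using ((hasDerivAt_id s).ofReal_comp.mul_const (exp (θ * I))).const_add (0:ℂ)
      exact h1.comp s h2
    have hc : ContinuousOn (fun s : ℝ => deriv f (circleMap 0 s θ) * exp (θ * I)) (uIcc 0 r) := by
      rw [uIcc_of_le hr]
      refine ContinuousOn.mul ?_ continuousOn_const
      refine (hf.deriv isOpen_ball).continuousOn.comp ?_ hmem
      unfold circleMap
      fun_prop
    have := intervalIntegral.integral_eq_sub_of_hasDerivAt hder hc.intervalIntegrable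
    rw [intervalIntegral.integral_of_le hr] at this
    have h0 : f (circleMap 0 r θ) = f 0 + ∫ s in Ioc 0 r, deriv f (circleMap 0 s θ) * exp (θ * I) := by
      rw [this]; simp [circleMap]
    rw [h0]
    refine (enorm_add_le _ _).trans ?_
    gcongr
    refine (enorm_integral_le_lintegral_enorm _).trans_eq (lintegral_congr fun s => ?_)
    rw [← ofReal_norm, ← ofReal_norm, norm_mul, norm_exp_ofReal_mul_I, mul_one]
  have hm : Measurable fun p : ℝ × ℝ => ‖deriv f (circleMap 0 p.1 p.2)‖ₑ :=
    ((measurable_deriv f).comp measurable_circleMap_uncurry).enorm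
  calc circleL1 f r ≤ ∫⁻ θ in Ioc 0 (2 * Real.pi), (‖f 0‖ₑ +
      ∫⁻ s in Ioc 0 r, ‖deriv f (circleMap 0 s θ)‖ₑ) := lintegral_mono hpt
    _ = _ := by
      rw [lintegral_add_left measurable_const, setLIntegral_const, Real.volume_Ioc, sub_zero,
        mul_comm]
      congr 1
      unfold circleL1
      exact lintegral_lintegral_swap (f := fun θ s => ‖deriv f (circleMap 0 s θ)‖ₑ)
        (hm.comp measurable_swap).aemeasurable

/-! ### Integration against the weight -/

/-- Integration in polar coordinates against a radial weight. -/
lemma lintegral_ball_polar {E : Type*} [NormedAddCommGroup E] [MeasurableSpace E] [BorelSpace E]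
    {g : ℂ → E} (hg : Measurable g) {W : ℝ → ℝ≥0∞}
    (hW : AEMeasurable W (volume.restrict (Ioo 0 1))) :
    ∫⁻ z in ball (0:ℂ) 1, ‖g z‖ₑ * W ‖z‖ =
      ∫⁻ r in Ioo 0 1, ENNReal.ofReal r * (circleL1 g r * W r) := by
  set F : ℝ × ℝ → ℝ≥0∞ := fun p => ENNReal.ofReal p.1 * (‖g (circleMap 0 p.1 p.2)‖ₑ * W p.1)
    with hF
  rw [← lintegral_indicator measurableSet_ball, ← Complex.lintegral_comp_polarCoord_symm,
    polarCoord_target]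
  have h1 : ∫⁻ p in Ioi (0:ℝ) ×ˢ Ioo (-Real.pi) Real.pi, ENNReal.ofReal p.1 •
      (ball (0:ℂ) 1).indicator (fun z => ‖g z‖ₑ * W ‖z‖) (Complex.polarCoord.symm p) =
      ∫⁻ p in Ioi (0:ℝ) ×ˢ Ioo (-Real.pi) Real.pi,
        (Iio (1:ℝ) ×ˢ (univ : Set ℝ)).indicator F p := by
    refine setLIntegral_congr_fun (measurableSet_Ioi.prod measurableSet_Ioo) fun p hp => ?_
    have hp1 : 0 < p.1 := hp.1
    have hs : Complex.polarCoord.symm p = circleMap 0 p.1 p.2 := by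
      rw [Complex.polarCoord_symm_apply, circleMap, exp_mul_I]; simp
    have hn : ‖circleMap 0 p.1 p.2‖ = p.1 := by simp [abs_of_pos hp1]
    simp only [hs, smul_eq_mul]
    by_cases h : p.1 < 1
    · rw [indicator_of_mem (by simpa [abs_of_pos hp1] using h), indicator_of_mem (by simpa using h),
        hn]
    · rw [indicator_of_notMem (by simpa [abs_of_pos hp1] using h),
        indicator_of_notMem (by simpa using h), mul_zero]
  have hset : Iio (1:ℝ) ×ˢ (univ : Set ℝ) ∩ Ioi (0:ℝ) ×ˢ Ioo (-Real.pi) Real.pi =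
      Ioo 0 1 ×ˢ Ioo (-Real.pi) Real.pi := by
    ext p; simp; tauto
  rw [h1, setLIntegral_indicator (measurableSet_Iio.prod MeasurableSet.univ), hset,
    Measure.volume_eq_prod, ← Measure.prod_restrict, lintegral_prod]
  · refine lintegral_congr fun r => ?_
    have hper : ∫⁻ θ in Ioo (-Real.pi) Real.pi, ‖g (circleMap 0 r θ)‖ₑ = circleL1 g r := by
      rw [setLIntegral_congr Ioo_ae_eq_Ioc, circleL1]
      have e1 := isAddFundamentalDomain_Ioc Real.two_pi_pos (-Real.pi)
      have e2 := isAddFundamentalDomain_Ioc Real.two_pi_pos 0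
      rw [show -Real.pi + 2 * Real.pi = Real.pi by ring] at e1
      rw [zero_add] at e2
      refine e1.setLIntegral_eq e2 _ ?_
      have hp : Function.Periodic (fun θ => ‖g (circleMap 0 r θ)‖ₑ) (2 * Real.pi) := fun θ => by
        simp only [periodic_circleMap 0 r θ]
      exact hp.map_vadd_zmultiples
    have hm : Measurable fun θ => ‖g (circleMap 0 r θ)‖ₑ :=
      (hg.comp (continuous_circleMap 0 r).measurable).enorm
    rw [← hper]
    simp only [hF]
    rw [lintegral_const_mul _ (hm.mul_const _), lintegral_mul_const _ hm]
  · have e1 : Measurable fun p : ℝ × ℝ => ‖g (circleMap 0 p.1 p.2)‖ₑ :=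
      (hg.comp measurable_circleMap_uncurry).enorm
    have e2 : Measurable fun p : ℝ × ℝ => ENNReal.ofReal p.1 := by fun_prop
    exact e2.aemeasurable.mul (e1.aemeasurable.mul hW.comp_fst)

/-- The part of the argument using `ω ∈ D`: the mass of `[s, 1)` is controlled by the mass of an
interval `(t, t']` with `1 - t = (1 - s) / 2` and `1 - t' = (1 - s) / (2 K)`. -/
lemma lintegral_tail_le {ω : ℝ → ℝ} (hω : RadialWeight ω) (h1 : Dhat ω) (h2 : Dcheck ω) :
    ∃ c K : ℝ, 0 < c ∧ 1 < K ∧ ∀ s ∈ Ioo (0:ℝ) 1,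
      ∫⁻ u in Ico s 1, ENNReal.ofReal (ω u) ≤
        ENNReal.ofReal c * ∫⁻ u in Ioc ((1 + s) / 2) (1 - (1 - s) / (2 * K)),
          ENNReal.ofReal (ω u) := by
  obtain ⟨hnn, hint, -⟩ := hω
  obtain ⟨C₁, hC₁, h1⟩ := h1
  obtain ⟨K, C, hK, hC, h2⟩ := h2
  have hC' : 0 < C - 1 := by linarith
  refine ⟨C₁ * (C / (C - 1)), K, by positivity, hK, fun s hs => ?_⟩
  set t := (1 + s) / 2 with ht
  set t' := 1 - (1 - s) / (2 * K) with ht'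
  have hKs : (1 - s) / (2 * K) < (1 - s) / 2 := by
    apply div_lt_div_of_pos_left <;> linarith [hs.2]
  have hKs0 : 0 < (1 - s) / (2 * K) := by
    apply div_pos <;> linarith [hs.2]
  have htt : t < t' := by rw [ht, ht']; linarith
  have ht0 : 0 < t := by rw [ht]; linarith [hs.1]
  have ht1 : t' < 1 := by rw [ht']; linarith
  have hst : s < t := by rw [ht]; linarith [hs.2]
  have hI : ∀ a b : ℝ, 0 ≤ a → a ≤ b → b ≤ 1 → IntervalIntegrable ω volume a b := by
    intro a b ha hab hb
    rw [intervalIntegrable_iff_integrableOn_Ico_of_le hab]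
    exact hint.mono_set (Ico_subset_Ico ha hb)
  have hO : ∀ a b : ℝ, 0 ≤ a → a ≤ b → b ≤ 1 →
      ENNReal.ofReal (∫ u in a..b, ω u) = ∫⁻ u in Ico a b, ENNReal.ofReal (ω u) := by
    intro a b ha hab hb
    rw [intervalIntegral.integral_of_le hab, integral_Ioc_eq_integral_Ioo,
      ← integral_Ico_eq_integral_Ioo, ofReal_integral_eq_lintegral_ofReal]
    · exact (intervalIntegrable_iff_integrableOn_Ico_of_le hab).1 (hI a b ha hab hb)
    · filter_upwards [ae_restrict_mem measurableSet_Ico] with u hu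
      exact hnn u ⟨ha.trans hu.1, hu.2.trans_le hb⟩
  have e1 := h1 s ⟨hs.1.le, hs.2⟩
  have e2 := h2 t ⟨ht0.le, by linarith⟩
  have e3 : 1 - (1 - t) / K = t' := by
    rw [ht, ht']
    have : K ≠ 0 := by linarith
    field_simp; ring
  rw [e3] at e2
  have e4 : (∫ u in t..t', ω u) = tailInt ω t - tailInt ω t' := by
    unfold tailInt
    rw [← intervalIntegral.integral_add_adjacent_intervals (hI t t' ht0.le htt.le ht1.le)
      (hI t' 1 (by linarith) ht1.le le_rfl)]
    ring
  have e5 : tailInt ω t ≤ C / (C - 1) * ∫ u in t..t', ω u := by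
    rw [e4, div_mul_eq_mul_div, le_div_iff₀ hC']
    nlinarith
  have e6 : tailInt ω s ≤ C₁ * (C / (C - 1)) * ∫ u in t..t', ω u := by
    rw [mul_assoc]
    exact e1.trans (mul_le_mul_of_nonneg_left e5 (by linarith))
  rw [← setLIntegral_congr Ioo_ae_eq_Ioc, setLIntegral_congr Ioo_ae_eq_Ico,
    ← hO t t' ht0.le htt.le ht1.le,
    ← hO s 1 hs.1.le hs.2.le le_rfl, ← ENNReal.ofReal_mul (by positivity)]
  exact ENNReal.ofReal_le_ofReal e6

/-- If `B s ≤ 2 / (u - s) * N u` for `s < u`, then the weighted integral of `B` over tails is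
controlled by that of `N`: for each `u` the admissible `s` fill an interval of length comparable
to `1 - u`, which cancels the factor `2 / (u - s)`. -/
lemma lintegral_mul_tail_le {B N W : ℝ → ℝ≥0∞} (hN : Measurable N)
    (hW : AEMeasurable W (volume.restrict (Ioo 0 1)))
    (hBN : ∀ s u : ℝ, 0 ≤ s → s < u → u < 1 → B s ≤ ENNReal.ofReal (2 / (u - s)) * N u)
    {c K : ℝ} (hK : 1 < K)
    (hT : ∀ s ∈ Ioo (0:ℝ) 1, ∫⁻ u in Ico s 1, W u ≤
      ENNReal.ofReal c * ∫⁻ u in Ioc ((1 + s) / 2) (1 - (1 - s) / (2 * K)), W u) :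
    ∫⁻ s in Ioo 0 1, B s * ∫⁻ u in Ico s 1, W u ≤
      ENNReal.ofReal c * (ENNReal.ofReal (8 * (K - 1)) *
        ∫⁻ u in Ioo 0 1, ENNReal.ofReal u * (N u * W u)) := by
  set G : ℝ → ℝ≥0∞ := fun u => ENNReal.ofReal (4 * u / (1 - u)) * (N u * W u) with hG
  have hGm : AEMeasurable G (volume.restrict (Ioo 0 1)) :=
    (Measurable.aemeasurable (by fun_prop)).mul (hN.aemeasurable.mul hW)
  set S : Set (ℝ × ℝ) := {p | 1 - 2 * K * (1 - p.2) ≤ p.1 ∧ p.1 ≤ 1 - 2 * (1 - p.2)} with hS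
  have hSm : MeasurableSet S := by
    refine MeasurableSet.inter (s₁ := {p : ℝ × ℝ | 1 - 2 * K * (1 - p.2) ≤ p.1})
      (s₂ := {p : ℝ × ℝ | p.1 ≤ 1 - 2 * (1 - p.2)}) ?_ ?_
    · exact measurableSet_le (by fun_prop) (by fun_prop)
    · exact measurableSet_le (by fun_prop) (by fun_prop)
  set H : ℝ → ℝ → ℝ≥0∞ := fun s u => S.indicator (fun p => G p.2) (s, u) with hH
  have hHm : AEMeasurable (Function.uncurry H)
      ((volume.restrict (Ioo 0 1)).prod (volume.restrict (Ioo 0 1))) :=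
    AEMeasurable.indicator (hGm.comp_snd) hSm
  have hpt : ∀ s ∈ Ioo (0:ℝ) 1, B s * ∫⁻ u in Ico s 1, W u ≤
      ENNReal.ofReal c * ∫⁻ u in Ioo 0 1, H s u := by
    intro s hs
    have hKs0 : 0 < (1 - s) / (2 * K) := by apply div_pos <;> linarith [hs.2]
    set J := Ioc ((1 + s) / 2) (1 - (1 - s) / (2 * K)) with hJ
    have hJsub : J ⊆ Ioo 0 1 := by
      intro u hu
      exact ⟨by linarith [hu.1, hs.1], by linarith [hu.2]⟩
    calc B s * ∫⁻ u in Ico s 1, W u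
        ≤ B s * (ENNReal.ofReal c * ∫⁻ u in J, W u) := by gcongr; exact hT s hs
      _ = ENNReal.ofReal c * ∫⁻ u in J, B s * W u := by
        rw [lintegral_const_mul'' _ (hW.mono_set hJsub)]; ring
      _ ≤ ENNReal.ofReal c * ∫⁻ u in J, H s u := by
        gcongr ENNReal.ofReal c * ?_
        refine setLIntegral_mono_ae' measurableSet_Ioc (Filter.Eventually.of_forall fun u hu => ?_)
        have hu1 : u < 1 := (hJsub hu).2
        have hu2 : (1 + s) / 2 < u := hu.1
        have hmem : (s, u) ∈ S := by
          have h3 : (1 - s) / (2 * K) ≤ 1 - u := by linarith [hu.2]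
          rw [div_le_iff₀ (by linarith)] at h3
          exact ⟨by simp only; linarith, by simp only; linarith⟩
        simp only [hH, indicator_of_mem hmem, hG]
        rw [← mul_assoc]
        gcongr
        refine (hBN s u hs.1.le (by linarith [hs.2]) hu1).trans ?_
        gcongr ENNReal.ofReal ?_ * _
        rw [div_le_div_iff₀ (by linarith [hs.2]) (by linarith)]
        nlinarith [hs.1]
      _ ≤ ENNReal.ofReal c * ∫⁻ u in Ioo 0 1, H s u := by
        gcongr
  calc ∫⁻ s in Ioo 0 1, B s * ∫⁻ u in Ico s 1, W u
      ≤ ∫⁻ s in Ioo 0 1, ENNReal.ofReal c * ∫⁻ u in Ioo 0 1, H s u :=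
        setLIntegral_mono_ae' measurableSet_Ioo (Filter.Eventually.of_forall hpt)
    _ = ENNReal.ofReal c * ∫⁻ u in Ioo 0 1, ∫⁻ s in Ioo 0 1, H s u := by
        rw [lintegral_const_mul' _ _ (by simp), lintegral_lintegral_swap hHm]
    _ ≤ ENNReal.ofReal c * ∫⁻ u in Ioo 0 1,
          ENNReal.ofReal (8 * (K - 1)) * (ENNReal.ofReal u * (N u * W u)) := by
        gcongr ENNReal.ofReal c * ?_
        refine setLIntegral_mono_ae' measurableSet_Ioo (Filter.Eventually.of_forall fun u hu => ?_)
        have hu1 : 0 < 1 - u := by linarith [hu.2]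
        calc ∫⁻ s in Ioo 0 1, H s u ≤ ∫⁻ s, H s u := setLIntegral_le_lintegral _ _
          _ = ∫⁻ s, (Icc (1 - 2 * K * (1 - u)) (1 - 2 * (1 - u))).indicator (fun _ => G u) s := rfl
          _ = G u * ENNReal.ofReal (2 * (K - 1) * (1 - u)) := by
            rw [lintegral_indicator measurableSet_Icc, setLIntegral_const, Real.volume_Icc]
            congr 2; ring
          _ = ENNReal.ofReal (8 * (K - 1)) * (ENNReal.ofReal u * (N u * W u)) := by
            simp only [hG]
            rw [mul_comm, ← mul_assoc, ← ENNReal.ofReal_mul (by nlinarith),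
              ← mul_assoc (ENNReal.ofReal (8 * (K - 1))), ← ENNReal.ofReal_mul (by linarith)]
            congr 2
            field_simp; ring
    _ = _ := by rw [lintegral_const_mul' _ _ ENNReal.ofReal_ne_top]

/-- `∫ A(r) r ω(r) dr ≤ 2π |f(0)| ω̂(0) + ∫ B ω̂`, with `A`, `B` the circle
integrals of `f` and `f'`: integrate `f'` along radii and use Tonelli. -/
lemma lintegral_circleL1_le {f : ℂ → ℂ} (hf : DifferentiableOn ℂ f (ball 0 1)) {W : ℝ → ℝ≥0∞}
    (hW : AEMeasurable W (volume.restrict (Ioo 0 1))) :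
    ∫⁻ r in Ioo 0 1, ENNReal.ofReal r * (circleL1 f r * W r) ≤
      ENNReal.ofReal (2 * Real.pi) * ‖f 0‖ₑ * (∫⁻ r in Ioo 0 1, W r) +
        ∫⁻ s in Ioo 0 1, circleL1 (deriv f) s * ∫⁻ u in Ico s 1, W u := by
  set B := circleL1 (deriv f) with hB
  have hBm : Measurable B := measurable_circleL1 (measurable_deriv f)
  have hfin : ENNReal.ofReal (2 * Real.pi) * ‖f 0‖ₑ ≠ ⊤ := by simp [ENNReal.mul_eq_top]
  set S : Set (ℝ × ℝ) := {p | p.2 ≤ p.1} with hS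
  have hSm : MeasurableSet S := measurableSet_le (by fun_prop) (by fun_prop)
  set H : ℝ → ℝ → ℝ≥0∞ := fun r s => S.indicator (fun p => B p.2 * W p.1) (r, s) with hH
  have hHm : AEMeasurable (Function.uncurry H)
      ((volume.restrict (Ioo 0 1)).prod (volume.restrict (Ioo 0 1))) :=
    AEMeasurable.indicator (hBm.aemeasurable.comp_snd.mul hW.comp_fst) hSm
  calc ∫⁻ r in Ioo 0 1, ENNReal.ofReal r * (circleL1 f r * W r)
      ≤ ∫⁻ r in Ioo 0 1, (ENNReal.ofReal (2 * Real.pi) * ‖f 0‖ₑ * W r +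
          ∫⁻ s in Ioo 0 1, H r s) := by
        refine setLIntegral_mono_ae' measurableSet_Ioo (Filter.Eventually.of_forall fun r hr => ?_)
        have hr1 : ENNReal.ofReal r ≤ 1 := by
          rw [← ENNReal.ofReal_one]; exact ENNReal.ofReal_le_ofReal hr.2.le
        refine (mul_le_of_le_one_left' hr1).trans ?_
        grw [circleL1_le hf hr.1.le hr.2, add_mul]
        gcongr
        rw [← lintegral_mul_const _ hBm]
        have e : Ioc 0 r = Iic r ∩ Ioo 0 1 := by
          ext x; simp only [mem_Ioc, mem_inter_iff, mem_Iic, mem_Ioo]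
          constructor
          · rintro ⟨a, b⟩; exact ⟨b, a, b.trans_lt hr.2⟩
          · rintro ⟨a, b, _⟩; exact ⟨b, a⟩
        rw [e, ← setLIntegral_indicator measurableSet_Iic]
        exact le_of_eq rfl
    _ = ENNReal.ofReal (2 * Real.pi) * ‖f 0‖ₑ * (∫⁻ r in Ioo 0 1, W r) +
          ∫⁻ s in Ioo 0 1, ∫⁻ r in Ioo 0 1, H r s := by
        rw [lintegral_add_left' (hW.const_mul _), lintegral_const_mul' _ _ hfin,
          lintegral_lintegral_swap hHm]
    _ = _ := by
        congr 1
        refine setLIntegral_congr_fun measurableSet_Ioo fun s hs => ?_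
        have e : Ico s 1 = Ici s ∩ Ioo 0 1 := by
          ext x; simp only [mem_Ico, mem_inter_iff, mem_Ici, mem_Ioo]
          constructor
          · rintro ⟨a, b⟩; exact ⟨a, hs.1.trans_le a, b⟩
          · rintro ⟨a, _, b⟩; exact ⟨a, b⟩
        have hsub : Ico s 1 ⊆ Ioo 0 1 := fun x hx => ⟨hs.1.trans_le hx.1, hx.2⟩
        rw [← lintegral_const_mul'' _ (hW.mono_set hsub), e,
          ← setLIntegral_indicator measurableSet_Ici]
        rfl

/-! ### The norm estimate -/

/-- The theorem for functions that are measurable on the whole plane. -/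
lemma exists_bound_of_measurable {ω : ℝ → ℝ} (hω : RadialWeight ω) (h1 : Dhat ω) (h2 : Dcheck ω) :
    ∃ C : ℝ, 0 < C ∧ ∀ f : ℂ → ℂ, Measurable f → DifferentiableOn ℂ f (Metric.ball (0:ℂ) 1) →
      ApNorm 1 ω f ≤ C * (‖f 0‖ + LpReNorm 1 ω f) := by
  obtain ⟨c, K, hc, hK, hT⟩ := lintegral_tail_le hω h1 h2
  obtain ⟨hnn, hint, htail⟩ := hω
  have hT0 := htail 0 (by simp)
  have hC' : 0 < c * (8 * (K - 1)) := by
    have : 0 < K - 1 := by linarith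
    positivity
  refine ⟨2 * tailInt ω 0 + c * (8 * (K - 1)), by positivity, fun f hfm hf => ?_⟩
  have hnn' : ∀ z ∈ ball (0:ℂ) 1, 0 ≤ ω ‖z‖ := fun z hz =>
    hnn _ ⟨norm_nonneg z, by simpa using hz⟩
  have hRe0 : 0 ≤ LpReNorm 1 ω f := by
    refine mul_nonneg (by positivity) (setIntegral_nonneg measurableSet_ball fun z hz => ?_)
    have := hnn' z hz
    positivity
  unfold ApNorm LpReNorm at *
  simp only [Real.rpow_one] at *
  by_cases hI : IntegrableOn (fun z : ℂ => ‖f z‖ * ω ‖z‖) (ball 0 1)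
  swap
  · -- the Bochner integral of a non-integrable function is `0`
    rw [integral_undef hI, mul_zero]
    positivity
  have hIre : IntegrableOn (fun z : ℂ => |(f z).re| * ω ‖z‖) (ball 0 1) := by
    -- measurability of `ω ‖z‖` is only available through the product `‖f z‖ * ω ‖z‖`
    have hm : Measurable fun z => |(f z).re| / ‖f z‖ := by fun_prop
    refine (Integrable.bdd_mul (c := 1) hI hm.aestronglyMeasurable
      (Filter.Eventually.of_forall fun z => ?_)).congr (Filter.Eventually.of_forall fun z => ?_)
    · rw [norm_div, Real.norm_eq_abs, abs_abs, norm_norm]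
      exact div_le_one_of_le₀ (abs_re_le_norm _) (norm_nonneg _)
    · by_cases h0 : f z = 0
      · simp [h0]
      · have : ‖f z‖ ≠ 0 := by simpa using h0
        simp only; field_simp
  set W : ℝ → ℝ≥0∞ := fun u => ENNReal.ofReal (ω u) with hWdef
  have hW : AEMeasurable W (volume.restrict (Ioo 0 1)) :=
    (hint.mono_set Ioo_subset_Ico_self).aemeasurable.ennreal_ofReal
  have key := lintegral_circleL1_le hf hW
  have key2 := lintegral_mul_tail_le (N := circleL1 fun z => (f z).re) (B := circleL1 (deriv f))
    (measurable_circleL1 (by fun_prop)) hW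
    (fun s u hs hsu hu => circleL1_deriv_le hfm hf hs hsu hu) hK hT
  rw [← lintegral_ball_polar hfm hW] at key
  rw [← lintegral_ball_polar (by fun_prop) hW] at key2
  have t1 : ∫⁻ z in ball (0:ℂ) 1, ‖f z‖ₑ * W ‖z‖ =
      ENNReal.ofReal (∫ z in ball (0:ℂ) 1, ‖f z‖ * ω ‖z‖) := by
    rw [ofReal_integral_eq_lintegral_ofReal hI]
    · refine lintegral_congr fun z => ?_
      rw [ENNReal.ofReal_mul (norm_nonneg _), ofReal_norm]
    · filter_upwards [ae_restrict_mem measurableSet_ball] with z hz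
      exact mul_nonneg (norm_nonneg _) (hnn' z hz)
  have t2 : ∫⁻ z in ball (0:ℂ) 1, ‖(f z).re‖ₑ * W ‖z‖ =
      ENNReal.ofReal (∫ z in ball (0:ℂ) 1, |(f z).re| * ω ‖z‖) := by
    rw [ofReal_integral_eq_lintegral_ofReal hIre]
    · refine lintegral_congr fun z => ?_
      rw [ENNReal.ofReal_mul (abs_nonneg _), ← Real.norm_eq_abs, ofReal_norm]
    · filter_upwards [ae_restrict_mem measurableSet_ball] with z hz
      exact mul_nonneg (abs_nonneg _) (hnn' z hz)
  have t3 : ∫⁻ r in Ioo 0 1, W r = ENNReal.ofReal (tailInt ω 0) := by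
    rw [tailInt, intervalIntegral.integral_of_le zero_le_one, integral_Ioc_eq_integral_Ioo,
      ofReal_integral_eq_lintegral_ofReal (hint.mono_set Ioo_subset_Ico_self)]
    filter_upwards [ae_restrict_mem measurableSet_Ioo] with u hu
    exact hnn u ⟨hu.1.le, hu.2⟩
  have hpi := Real.pi_pos
  have hRe1 : 0 ≤ ∫ z in ball (0:ℂ) 1, |(f z).re| * ω ‖z‖ :=
    setIntegral_nonneg measurableSet_ball fun z hz => mul_nonneg (abs_nonneg _) (hnn' z hz)
  have h3 := key.trans (add_le_add_right key2 _)
  rw [t1, t2, t3, ← ofReal_norm, ← ENNReal.ofReal_mul (by positivity),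
    ← ENNReal.ofReal_mul (by positivity), ← ENNReal.ofReal_mul (by linarith),
    ← ENNReal.ofReal_mul hc.le, ← ENNReal.ofReal_add (by positivity)
      (mul_nonneg hc.le (mul_nonneg (by linarith) hRe1)),
    ENNReal.ofReal_le_ofReal_iff (add_nonneg (by positivity)
      (mul_nonneg hc.le (mul_nonneg (by linarith) hRe1)))] at h3
  have h4 := mul_le_mul_of_nonneg_left h3 (inv_nonneg.2 hpi.le)
  refine h4.trans ?_
  generalize (∫ z in ball (0:ℂ) 1, |(f z).re| * ω ‖z‖) = R at *
  have e : Real.pi⁻¹ * (2 * Real.pi * ‖f 0‖ * tailInt ω 0 + c * (8 * (K - 1) * R)) =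
      2 * tailInt ω 0 * ‖f 0‖ + c * (8 * (K - 1)) * (Real.pi⁻¹ * R) := by
    field_simp
  rw [e]
  nlinarith [mul_nonneg hT0.le hRe0, mul_nonneg hC'.le (norm_nonneg (f 0))]

end RePartEstimate

/-- If `ω ∈ D = D̂ ∩ Ď`, then there is `C = C(ω) > 0` with
`‖f‖_{A^1_ω} ≤ C (|f(0)| + ‖Re f‖_{L^1_ω})` for every analytic `f` on `𝔻`. -/
theorem statement17 (ω : ℝ → ℝ) (hω : RadialWeight ω) (h1 : Dhat ω) (h2 : Dcheck ω) :
    ∃ C : ℝ, 0 < C ∧ ∀ f : ℂ → ℂ, DifferentiableOn ℂ f (Metric.ball (0:ℂ) 1) →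
      ApNorm 1 ω f ≤ C * (‖f 0‖ + LpReNorm 1 ω f) := by
  obtain ⟨C, hC, h⟩ := RePartEstimate.exists_bound_of_measurable hω h1 h2
  refine ⟨C, hC, fun f hf => ?_⟩
  -- extending `f` by `0` outside the disc makes it measurable and changes neither side
  set g : ℂ → ℂ := (Metric.ball (0:ℂ) 1).indicator f with hg
  have hfg : EqOn g f (Metric.ball 0 1) := fun z hz => indicator_of_mem hz f
  have hgm : Measurable g := by
    classical
    have := hf.continuousOn.measurable_piecewise (g := fun _ => (0:ℂ)) continuousOn_const
      measurableSet_ball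
    rwa [show (Metric.ball (0:ℂ) 1).piecewise f (fun _ => 0) = g from
      piecewise_eq_indicator] at this
  have h0 : g 0 = f 0 := hfg (by simp)
  have e1 : ApNorm 1 ω g = ApNorm 1 ω f := by
    refine congrArg (Real.pi⁻¹ * ·) (setIntegral_congr_fun measurableSet_ball fun z hz => ?_)
    simp only [hfg hz]
  have e2 : LpReNorm 1 ω g = LpReNorm 1 ω f := by
    refine congrArg (Real.pi⁻¹ * ·) (setIntegral_congr_fun measurableSet_ball fun z hz => ?_)
    simp only [hfg hz]
  have := h g hgm (hf.congr hfg)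
  rwa [h0, e1, e2] at this
end
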